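/- arXiv:2501.14928 — 6 statements merged into one kernel-verified Lean document; each statement's English description precedes it below -/
import Mathlib

section
/- Strong data-processing inequality for locally private channels (Hellinger form): Let α > 0 and let Q be an α-DP channel from a measurable space Z to a measurable space O. Then there exist a probability space (Ω, ρ) and a jointly measurable family (ℓ_ω)_{ω∈Ω} of measurable functions ℓ_ω : Z → [0,1] such that for all probability measures P₁, P₂ on Z: ((e^α − 1)²/(8·e^{2α})) · E_{ω∼ρ}[ D_{ℓ_ω}(P₁,P₂)² ] ≤ D_H²(Q∘P₁, Q∘P₂) ≤ ((e^α − 1)²/8) · E_{ω∼ρ}[ D_{ℓ_ω}(P₁,P₂)² ]. -/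
/-!
Write `K = e^α` and let `ν = ⨅ z, Q z` be the infimum in the complete lattice of measures. The
privacy constraint says exactly that `ν ≤ Q z ≤ K ν` for every `z`. Taking the lattice infimum
rather than `inf_z q(o|z)` makes the choice of versions of the densities irrelevant: `q(·|z)` is
only controlled almost everywhere, with an exceptional set depending on `z`.

Hence `Q z` has a jointly measurable `ν`-density `r(o, z) ∈ [1, K]`, and the test functions are
`ℓ_o = (r(o, ·) - 1) / (K - 1)`, with `o` drawn from the normalisation of `ν`. The output law `Q∘P`
has the `ν`-density `∫ r(o, ·) dP ∈ [1, K]`. For `x, y ∈ [1, K]`, the factorisation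
`x - y = (√x - √y) (√x + √y)` puts `(√x - √y)²` between `(x - y)² / (4K)` and `(x - y)² / 4`, and
integrating against `ν` compares the Hellinger distance with
`∫ D_{r(o, ·)}² dν = ν(O) (K - 1)² E_ρ[D_ℓ²]`, where `1/K ≤ ν(O) ≤ 1`.
-/

/-- A probability space `(Ω, ρ)` together with a jointly measurable family
`(ℓ_ω)_{ω ∈ Ω}` of measurable functions `ℓ_ω : Z → [0,1]`. -/
structure TestFamily.{u', v'} (Z : Type u') [MeasurableSpace Z] : Type (max u' (v' + 1)) where
  Ω : Type v'
  [mΩ : MeasurableSpace Ω]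
  ρ : MeasureTheory.Measure Ω
  prob : MeasureTheory.IsProbabilityMeasure ρ
  ℓ : Ω → Z → ℝ
  meas : Measurable (Function.uncurry ℓ)
  range01 : ∀ ω z, ℓ ω z ∈ Set.Icc (0 : ℝ) 1

open MeasureTheory ProbabilityTheory
open scoped ENNReal

universe u v

instance {Z : Type u} [MeasurableSpace Z] (tf : TestFamily.{u, v} Z) :
    MeasurableSpace tf.Ω := tf.mΩ

/-- `D_ℓ(P, Q) := |E_{z ∼ P} ℓ(z) − E_{z ∼ Q} ℓ(z)|`. -/
noncomputable def Dl {Z : Type*} [MeasurableSpace Z] (ℓ : Z → ℝ) (P Q : Measure Z) : ℝ :=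
  |(∫ z, ℓ z ∂P) - ∫ z, ℓ z ∂Q|

/-- Squared Hellinger distance
`D_H²(P, Q) := (1/2) ∫ (√(dP/dμ) − √(dQ/dμ))² dμ` (with `μ := P + Q` as the
common dominating measure). -/
noncomputable def sqHellinger {O : Type*} [MeasurableSpace O] (P Q : Measure O) : ℝ :=
  (1 / 2) * ∫ o, (Real.sqrt ((P.rnDeriv (P + Q)) o).toReal
      - Real.sqrt ((Q.rnDeriv (P + Q)) o).toReal) ^ 2 ∂(P + Q)

section Sqrt

lemma sq_sqrt_sub_sqrt_mul_sq_sqrt_add_sqrt {x y : ℝ} (hx : 0 ≤ x) (hy : 0 ≤ y) :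
    (√x - √y) ^ 2 * (√x + √y) ^ 2 = (x - y) ^ 2 := by
  rw [← mul_pow, mul_comm, ← sq_sub_sq, Real.sq_sqrt hx, Real.sq_sqrt hy]

lemma sq_sqrt_sub_sqrt_le {a x y : ℝ} (ha : 0 < a) (hx : a ≤ x) (hy : a ≤ y) :
    (√x - √y) ^ 2 ≤ (x - y) ^ 2 / (4 * a) := by
  rw [le_div_iff₀ (by positivity),
    ← sq_sqrt_sub_sqrt_mul_sq_sqrt_add_sqrt (ha.le.trans hx) (ha.le.trans hy)]
  gcongr
  calc 4 * a = (√a + √a) ^ 2 := by rw [← two_mul, mul_pow, Real.sq_sqrt ha.le]; norm_num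
    _ ≤ (√x + √y) ^ 2 := by gcongr

lemma div_le_sq_sqrt_sub_sqrt {b x y : ℝ} (hx : x ∈ Set.Icc 0 b) (hy : y ∈ Set.Icc 0 b) :
    (x - y) ^ 2 / (4 * b) ≤ (√x - √y) ^ 2 := by
  have hb : 0 ≤ b := hx.1.trans hx.2
  refine div_le_of_le_mul₀ (by positivity) (by positivity) ?_
  rw [← sq_sqrt_sub_sqrt_mul_sq_sqrt_add_sqrt hx.1 hy.1]
  gcongr
  calc (√x + √y) ^ 2 ≤ (√b + √b) ^ 2 := by gcongr; exacts [hx.2, hy.2]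
    _ = 4 * b := by rw [← two_mul, mul_pow, Real.sq_sqrt hb]; norm_num

lemma sq_sqrt_sub_sqrt_le_add {x y : ℝ} (hx : 0 ≤ x) (hy : 0 ≤ y) : (√x - √y) ^ 2 ≤ x + y := by
  rw [sub_sq, Real.sq_sqrt hx, Real.sq_sqrt hy]
  have : 0 ≤ √x * √y := by positivity
  linarith

end Sqrt

section Hellinger

variable {O : Type*} [MeasurableSpace O] {ν : Measure O} [SigmaFinite ν]

lemma sqHellinger_eq_integral_rnDeriv {P Q : Measure O} [SigmaFinite P] [SigmaFinite Q]
    (hP : P ≪ ν) (hQ : Q ≪ ν) :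
    sqHellinger P Q =
      (1 / 2) * ∫ o, (√(P.rnDeriv ν o).toReal - √(Q.rnDeriv ν o).toReal) ^ 2 ∂ν := by
  have hPPQ : P ≪ P + Q := Measure.AbsolutelyContinuous.rfl.add_right Q
  have hQPQ : Q ≪ P + Q := Measure.AbsolutelyContinuous.rfl.add_right' P
  rw [sqHellinger, ← integral_toReal_rnDeriv_mul (hP.add_left hQ)]
  congr 1
  refine integral_congr_ae ?_
  filter_upwards [Measure.rnDeriv_mul_rnDeriv (κ := ν) hPPQ,
    Measure.rnDeriv_mul_rnDeriv (κ := ν) hQPQ] with o hPo hQo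
  rw [← hPo, ← hQo, Pi.mul_apply, Pi.mul_apply, ENNReal.toReal_mul, ENNReal.toReal_mul,
    Real.sqrt_mul ENNReal.toReal_nonneg, Real.sqrt_mul ENNReal.toReal_nonneg, ← sub_mul, mul_pow,
    Real.sq_sqrt ENNReal.toReal_nonneg, mul_comm]

variable {f g : O → ℝ}

lemma sqHellinger_withDensity_ofReal (hf : Measurable f) (hg : Measurable g)
    (hf₀ : ∀ o, 0 ≤ f o) (hg₀ : ∀ o, 0 ≤ g o) :
    sqHellinger (ν.withDensity fun o => ENNReal.ofReal (f o))
        (ν.withDensity fun o => ENNReal.ofReal (g o)) =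
      (1 / 2) * ∫ o, (√(f o) - √(g o)) ^ 2 ∂ν := by
  have hσ (h : O → ℝ) : SigmaFinite (ν.withDensity fun o => ENNReal.ofReal (h o)) :=
    SigmaFinite.withDensity_of_ne_top' fun _ => ENNReal.ofReal_ne_top
  have := hσ f
  have := hσ g
  rw [sqHellinger_eq_integral_rnDeriv (withDensity_absolutelyContinuous ν _)
    (withDensity_absolutelyContinuous ν _)]
  congr 1
  refine integral_congr_ae ?_
  filter_upwards [Measure.rnDeriv_withDensity ν hf.ennreal_ofReal,
    Measure.rnDeriv_withDensity ν hg.ennreal_ofReal] with o hfo hgo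
  rw [hfo, hgo, ENNReal.toReal_ofReal (hf₀ o), ENNReal.toReal_ofReal (hg₀ o)]

lemma sqHellinger_withDensity_le {a : ℝ} (ha : 0 < a) (hf : Measurable f) (hg : Measurable g)
    (haf : ∀ o, a ≤ f o) (hag : ∀ o, a ≤ g o) (hfg : Integrable (fun o => (f o - g o) ^ 2) ν) :
    sqHellinger (ν.withDensity fun o => ENNReal.ofReal (f o))
        (ν.withDensity fun o => ENNReal.ofReal (g o)) ≤
      1 / (8 * a) * ∫ o, (f o - g o) ^ 2 ∂ν := by
  rw [sqHellinger_withDensity_ofReal hf hg (fun o => ha.le.trans (haf o))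
    (fun o => ha.le.trans (hag o))]
  calc (1 / 2) * ∫ o, (√(f o) - √(g o)) ^ 2 ∂ν
      ≤ (1 / 2) * ∫ o, (f o - g o) ^ 2 / (4 * a) ∂ν := by
        gcongr ?_ * ?_
        exact integral_mono_of_nonneg (.of_forall fun o => sq_nonneg _) (hfg.div_const _)
          (.of_forall fun o => sq_sqrt_sub_sqrt_le ha (haf o) (hag o))
    _ = 1 / (8 * a) * ∫ o, (f o - g o) ^ 2 ∂ν := by rw [integral_div]; ring

lemma le_sqHellinger_withDensity {b : ℝ} (hf : Measurable f) (hg : Measurable g)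
    (hf_int : Integrable f ν) (hg_int : Integrable g ν)
    (hfb : ∀ o, f o ∈ Set.Icc 0 b) (hgb : ∀ o, g o ∈ Set.Icc 0 b) :
    1 / (8 * b) * ∫ o, (f o - g o) ^ 2 ∂ν ≤
      sqHellinger (ν.withDensity fun o => ENNReal.ofReal (f o))
        (ν.withDensity fun o => ENNReal.ofReal (g o)) := by
  have h_int : Integrable (fun o => (√(f o) - √(g o)) ^ 2) ν := by
    refine (hf_int.add hg_int).mono' (by fun_prop) (.of_forall fun o => ?_)
    rw [Real.norm_of_nonneg (sq_nonneg _)]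
    exact sq_sqrt_sub_sqrt_le_add (hfb o).1 (hgb o).1
  rw [sqHellinger_withDensity_ofReal hf hg (fun o => (hfb o).1) (fun o => (hgb o).1)]
  calc 1 / (8 * b) * ∫ o, (f o - g o) ^ 2 ∂ν
      = (1 / 2) * ∫ o, (f o - g o) ^ 2 / (4 * b) ∂ν := by rw [integral_div]; ring
    _ ≤ (1 / 2) * ∫ o, (√(f o) - √(g o)) ^ 2 ∂ν := by
        gcongr ?_ * ?_
        have hb (o : O) : 0 ≤ b := (hfb o).1.trans (hfb o).2
        exact integral_mono_of_nonneg
          (.of_forall fun o => div_nonneg (sq_nonneg _) (by linarith [hb o])) h_int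
          (.of_forall fun o => div_le_sq_sqrt_sub_sqrt (hfb o) (hgb o))

end Hellinger

section Density

variable {O Z : Type*} [MeasurableSpace O] [MeasurableSpace Z] {μ ν : Measure O}

lemma measure_le_smul_iInf {ι : Type*} {κ : ι → Measure O} {K : ℝ≥0∞} (hK₀ : K ≠ 0) (hK : K ≠ ∞)
    (h : ∀ i j, κ i ≤ K • κ j) (i : ι) : κ i ≤ K • ⨅ j, κ j := by
  have hinv : K⁻¹ • κ i ≤ ⨅ j, κ j :=
    le_iInf fun j => Measure.le_iff.2 fun s _ => by
      simpa using (ENNReal.inv_mul_le_iff hK₀ hK).2 (h i j s)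
  exact Measure.le_iff.2 fun s _ => by simpa using (ENNReal.inv_mul_le_iff hK₀ hK).1 (hinv s)

lemma ae_le_of_withDensity_le_withDensity [SigmaFinite μ] {f g : O → ℝ≥0∞}
    (hf : AEMeasurable f μ) (h : μ.withDensity f ≤ μ.withDensity g) : f ≤ᵐ[μ] g :=
  ae_le_of_forall_setLIntegral_le_of_sigmaFinite₀ hf fun s hs _ => by
    simpa only [withDensity_apply _ hs] using h s

lemma withDensity_eq_withDensity_div_rnDeriv [SigmaFinite μ] [SigmaFinite ν] {f : O → ℝ≥0∞}
    [SigmaFinite (μ.withDensity f)] (hf : Measurable f) (hfν : μ.withDensity f ≪ ν)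
    (hνμ : ν ≪ μ) :
    μ.withDensity f = ν.withDensity fun o => f o / ν.rnDeriv μ o := by
  conv_lhs => rw [← Measure.withDensity_rnDeriv_eq _ _ hfν]
  refine withDensity_congr_ae ?_
  filter_upwards [Measure.rnDeriv_eq_div (withDensity_absolutelyContinuous μ f) hνμ,
    hνμ (Measure.rnDeriv_withDensity μ hf)] with o hdiv hfo
  rw [hdiv, hfo]

-- Clamping to `[a, b]` turns almost everywhere bounds, whose null sets depend on `z`, into
-- everywhere bounds without losing joint measurability.
lemma exists_measurable_density_mem_Icc [SigmaFinite μ] [SigmaFinite ν] {κ : Z → Measure O}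
    [∀ z, SigmaFinite (κ z)] {q : O → Z → ℝ≥0∞} (hq : Measurable (Function.uncurry q))
    (hκ : ∀ z, κ z = μ.withDensity fun o => q o z) (hνμ : ν ≪ μ) {a b : ℝ} (ha : 0 ≤ a)
    (hab : a ≤ b) (haκ : ∀ z, ENNReal.ofReal a • ν ≤ κ z) (hκb : ∀ z, κ z ≤ ENNReal.ofReal b • ν) :
    ∃ r : O → Z → ℝ, Measurable (Function.uncurry r) ∧ (∀ o z, r o z ∈ Set.Icc a b) ∧
      ∀ z, κ z = ν.withDensity fun o => ENNReal.ofReal (r o z) := by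
  have hdiv : Measurable (Function.uncurry fun o z => q o z / ν.rnDeriv μ o) :=
    hq.div ((Measure.measurable_rnDeriv ν μ).comp measurable_fst)
  refine ⟨fun o z => max a (min b (q o z / ν.rnDeriv μ o).toReal),
    measurable_const.max (measurable_const.min hdiv.ennreal_toReal),
    fun o z => ⟨le_max_left _ _, max_le hab (min_le_left _ _)⟩, fun z => ?_⟩
  have hκdiv : κ z = ν.withDensity fun o => q o z / ν.rnDeriv μ o := by
    have : SigmaFinite (μ.withDensity fun o => q o z) := hκ z ▸ inferInstance
    rw [hκ z]
    exact withDensity_eq_withDensity_div_rnDeriv (hq.comp measurable_prodMk_right)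
      (hκ z ▸ (Measure.absolutelyContinuous_of_le (hκb z)).trans
        Measure.smul_absolutelyContinuous) hνμ
  have hlower : ∀ᵐ o ∂ν, ENNReal.ofReal a ≤ q o z / ν.rnDeriv μ o :=
    ae_le_of_withDensity_le_withDensity aemeasurable_const <| by
      simpa only [withDensity_const, ← hκdiv] using haκ z
  have hupper : ∀ᵐ o ∂ν, q o z / ν.rnDeriv μ o ≤ ENNReal.ofReal b :=
    ae_le_of_withDensity_le_withDensity (hdiv.comp measurable_prodMk_right).aemeasurable <| by
      simpa only [withDensity_const, ← hκdiv] using hκb z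
  rw [hκdiv]
  refine withDensity_congr_ae ?_
  filter_upwards [hlower, hupper] with o hao hbo
  have hfin : q o z / ν.rnDeriv μ o ≠ ∞ := ne_top_of_le_ne_top ENNReal.ofReal_ne_top hbo
  rw [min_eq_right (ENNReal.toReal_le_of_le_ofReal (ha.trans hab) hbo),
    max_eq_right ((ENNReal.ofReal_le_iff_le_toReal hfin).1 hao), ENNReal.ofReal_toReal hfin]

lemma one_mem_Icc_mul_measureReal_univ [IsFiniteMeasure ν] {f : O → ℝ} {a b : ℝ}
    (hf : Measurable f) (ha : 0 ≤ a) (hf_mem : ∀ o, f o ∈ Set.Icc a b) [IsProbabilityMeasure μ]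
    (hμ : μ = ν.withDensity fun o => ENNReal.ofReal (f o)) :
    1 ∈ Set.Icc (a * ν.real Set.univ) (b * ν.real Set.univ) := by
  have hf_int : Integrable f ν := .of_mem_Icc a b hf.aemeasurable (.of_forall hf_mem)
  have h_one : ∫ o, f o ∂ν = 1 := by
    rw [integral_eq_lintegral_of_nonneg_ae (.of_forall fun o => ha.trans (hf_mem o).1)
      hf.aestronglyMeasurable, ← setLIntegral_univ, ← withDensity_apply _ .univ, ← hμ, measure_univ,
      ENNReal.toReal_one]
  have h_const (c : ℝ) : ∫ _, c ∂ν = c * ν.real Set.univ := by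
    rw [integral_const, smul_eq_mul, mul_comm]
  rw [← h_one, ← h_const, ← h_const]
  exact ⟨integral_mono (integrable_const a) hf_int fun o => (hf_mem o).1,
    integral_mono hf_int (integrable_const b) fun o => (hf_mem o).2⟩

lemma bind_eq_withDensity_lintegral [SFinite ν] {κ : Z → Measure O} (hκ_meas : Measurable κ)
    {r : O → Z → ℝ≥0∞} (hr : Measurable (Function.uncurry r))
    (hκ : ∀ z, κ z = ν.withDensity fun o => r o z) (P : Measure Z) [SFinite P] :
    P.bind κ = ν.withDensity fun o => ∫⁻ z, r o z ∂P := by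
  ext s hs
  simp_rw [Measure.bind_apply hs hκ_meas.aemeasurable, hκ, withDensity_apply _ hs]
  exact lintegral_lintegral_swap (hr.comp measurable_swap).aemeasurable

end Density

section Dl

variable {Z : Type*} [MeasurableSpace Z] {P₁ P₂ : Measure Z}

lemma Dl_sub_const_div [IsProbabilityMeasure P₁] [IsProbabilityMeasure P₂] {f : Z → ℝ}
    (hf₁ : Integrable f P₁) (hf₂ : Integrable f P₂) (a c : ℝ) :
    Dl (fun z => (f z - a) / c) P₁ P₂ = Dl f P₁ P₂ / |c| := by
  simp_rw [Dl, integral_div, integral_sub hf₁ (integrable_const a),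
    integral_sub hf₂ (integrable_const a), integral_const, probReal_univ, one_smul]
  rw [← sub_div, sub_sub_sub_cancel_right, abs_div]

end Dl

instance TestFamily.instNonempty {Z : Type u} [MeasurableSpace Z] :
    Nonempty (TestFamily.{u, v} Z) :=
  ⟨{  Ω := PUnit
      ρ := Measure.dirac PUnit.unit
      prob := inferInstance
      ℓ := fun _ _ => 0
      meas := measurable_const
      range01 := fun _ _ => ⟨le_rfl, zero_le_one⟩ }⟩

section BoundedDensity

variable {Z : Type u} {O : Type v} [MeasurableSpace Z] [MeasurableSpace O]
  {ν : Measure O} [IsFiniteMeasure ν] {r : O → Z → ℝ} {a b : ℝ}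

/-- The test functions obtained by rescaling the sections of an `[a, b]`-valued family of
`ν`-densities `r` affinely to `[0, 1]`, indexed by the points of `O` with the normalisation of `ν`
as their law. For `a = b` the division by zero makes them vanish. -/
noncomputable def TestFamily.ofDensity [NeZero ν] (hr : Measurable (Function.uncurry r))
    (hr_mem : ∀ o z, r o z ∈ Set.Icc a b) : TestFamily.{u, v} Z where
  Ω := O
  ρ := (ν Set.univ)⁻¹ • ν
  prob := isProbabilityMeasureSMul
  ℓ o z := (r o z - a) / (b - a)
  meas := (hr.sub_const a).div_const (b - a)
  range01 o z := by
    have hra : 0 ≤ r o z - a := sub_nonneg.2 (hr_mem o z).1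
    have hrb : r o z - a ≤ b - a := sub_le_sub_right (hr_mem o z).2 a
    exact ⟨div_nonneg hra (hra.trans hrb), div_le_one_of_le₀ hrb (hra.trans hrb)⟩

lemma integrable_section (hr : Measurable (Function.uncurry r))
    (hr_mem : ∀ o z, r o z ∈ Set.Icc a b) (P : Measure Z) [IsFiniteMeasure P] (o : O) :
    Integrable (r o) P :=
  .of_mem_Icc a b (hr.comp measurable_prodMk_left).aemeasurable (.of_forall (hr_mem o))

lemma integral_section_mem_Icc (hr : Measurable (Function.uncurry r))
    (hr_mem : ∀ o z, r o z ∈ Set.Icc a b) (P : Measure Z) [IsProbabilityMeasure P] (o : O) :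
    ∫ z, r o z ∂P ∈ Set.Icc a b :=
  (convex_Icc a b).integral_mem isClosed_Icc (.of_forall (hr_mem o))
    (integrable_section hr hr_mem P o)

lemma measurable_integral_section (hr : Measurable (Function.uncurry r)) (P : Measure Z)
    [SFinite P] : Measurable fun o => ∫ z, r o z ∂P :=
  hr.stronglyMeasurable.integral_prod_right.measurable

lemma integral_Dl_sq_eq_integral_ofDensity [NeZero ν] (hr : Measurable (Function.uncurry r))
    (hr_mem : ∀ o z, r o z ∈ Set.Icc a b) (hab : a ≠ b) (P₁ P₂ : Measure Z)
    [IsProbabilityMeasure P₁] [IsProbabilityMeasure P₂] :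
    ∫ o, Dl (r o) P₁ P₂ ^ 2 ∂ν =
      ν.real Set.univ * (b - a) ^ 2 *
        ∫ ω, Dl ((TestFamily.ofDensity (ν := ν) hr hr_mem).ℓ ω) P₁ P₂ ^ 2
          ∂(TestFamily.ofDensity (ν := ν) hr hr_mem).ρ := by
  have hscale (o : O) : Dl (fun z => (r o z - a) / (b - a)) P₁ P₂ ^ 2 =
      Dl (r o) P₁ P₂ ^ 2 / (b - a) ^ 2 := by
    rw [Dl_sub_const_div (integrable_section hr hr_mem P₁ o) (integrable_section hr hr_mem P₂ o),
      div_pow, sq_abs]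
  have hmass : ν.real Set.univ ≠ 0 := measureReal_univ_ne_zero
  have hba : b - a ≠ 0 := sub_ne_zero.2 hab.symm
  change _ = _ * ∫ o, Dl (fun z => (r o z - a) / (b - a)) P₁ P₂ ^ 2 ∂((ν Set.univ)⁻¹ • ν)
  simp_rw [hscale]
  rw [integral_smul_measure, integral_div, ENNReal.toReal_inv, smul_eq_mul, ← measureReal_def]
  field_simp

variable {κ : Z → Measure O}

lemma bind_eq_withDensity_ofReal_integral (hκ_meas : Measurable κ)
    (hr : Measurable (Function.uncurry r)) (ha : 0 ≤ a) (hr_mem : ∀ o z, r o z ∈ Set.Icc a b)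
    (hκ : ∀ z, κ z = ν.withDensity fun o => ENNReal.ofReal (r o z)) (P : Measure Z)
    [IsFiniteMeasure P] :
    P.bind κ = ν.withDensity fun o => ENNReal.ofReal (∫ z, r o z ∂P) := by
  rw [bind_eq_withDensity_lintegral (r := fun o z => ENNReal.ofReal (r o z)) hκ_meas
    hr.ennreal_ofReal hκ P]
  congr with o
  exact (ofReal_integral_eq_lintegral_ofReal (integrable_section hr hr_mem P o)
    (.of_forall fun z => ha.trans (hr_mem o z).1)).symm

variable (P₁ P₂ : Measure Z) [IsProbabilityMeasure P₁] [IsProbabilityMeasure P₂]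

lemma sqHellinger_bind_le (hκ_meas : Measurable κ) (hr : Measurable (Function.uncurry r))
    (ha : 0 < a) (hr_mem : ∀ o z, r o z ∈ Set.Icc a b)
    (hκ : ∀ z, κ z = ν.withDensity fun o => ENNReal.ofReal (r o z)) :
    sqHellinger (P₁.bind κ) (P₂.bind κ) ≤ 1 / (8 * a) * ∫ o, Dl (r o) P₁ P₂ ^ 2 ∂ν := by
  have hm (P : Measure Z) [IsProbabilityMeasure P] := measurable_integral_section hr P
  have hmem (P : Measure Z) [IsProbabilityMeasure P] := integral_section_mem_Icc hr hr_mem P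
  have hint : Integrable (fun o => ((∫ z, r o z ∂P₁) - ∫ z, r o z ∂P₂) ^ 2) ν := by
    refine .of_mem_Icc 0 ((b - a) ^ 2) (((hm P₁).sub (hm P₂)).pow_const 2).aemeasurable
      (.of_forall fun o => ⟨sq_nonneg _, ?_⟩)
    rw [← sq_abs]
    gcongr
    exact Real.dist_le_of_mem_Icc (hmem P₁ o) (hmem P₂ o)
  simp_rw [Dl, sq_abs, bind_eq_withDensity_ofReal_integral hκ_meas hr ha.le hr_mem hκ]
  exact sqHellinger_withDensity_le ha (hm P₁) (hm P₂) (fun o => (hmem P₁ o).1)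
    (fun o => (hmem P₂ o).1) hint

lemma le_sqHellinger_bind (hκ_meas : Measurable κ) (hr : Measurable (Function.uncurry r))
    (ha : 0 ≤ a) (hr_mem : ∀ o z, r o z ∈ Set.Icc a b)
    (hκ : ∀ z, κ z = ν.withDensity fun o => ENNReal.ofReal (r o z)) :
    1 / (8 * b) * ∫ o, Dl (r o) P₁ P₂ ^ 2 ∂ν ≤ sqHellinger (P₁.bind κ) (P₂.bind κ) := by
  have hm (P : Measure Z) [IsProbabilityMeasure P] := measurable_integral_section hr P
  have hmem (P : Measure Z) [IsProbabilityMeasure P] := integral_section_mem_Icc hr hr_mem P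
  have hint (P : Measure Z) [IsProbabilityMeasure P] : Integrable (fun o => ∫ z, r o z ∂P) ν :=
    .of_mem_Icc a b (hm P).aemeasurable (.of_forall (hmem P))
  have hmem₀ (P : Measure Z) [IsProbabilityMeasure P] (o : O) : ∫ z, r o z ∂P ∈ Set.Icc 0 b :=
    Set.Icc_subset_Icc_left ha (hmem P o)
  simp_rw [Dl, sq_abs, bind_eq_withDensity_ofReal_integral hκ_meas hr ha hr_mem hκ]
  exact le_sqHellinger_withDensity (hm P₁) (hm P₂) (hint P₁) (hint P₂) (hmem₀ P₁) (hmem₀ P₂)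

lemma sqHellinger_bind_le_ofDensity [NeZero ν] [∀ z, IsProbabilityMeasure (κ z)]
    (hκ_meas : Measurable κ) (hr : Measurable (Function.uncurry r)) (ha : 0 < a) (hab : a ≠ b)
    (hr_mem : ∀ o z, r o z ∈ Set.Icc a b)
    (hκ : ∀ z, κ z = ν.withDensity fun o => ENNReal.ofReal (r o z)) :
    sqHellinger (P₁.bind κ) (P₂.bind κ) ≤ (b - a) ^ 2 / (8 * a ^ 2) *
      ∫ ω, Dl ((TestFamily.ofDensity (ν := ν) hr hr_mem).ℓ ω) P₁ P₂ ^ 2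
        ∂(TestFamily.ofDensity (ν := ν) hr hr_mem).ρ := by
  obtain ⟨z⟩ := P₁.nonempty_of_neZero
  have hmass : a * ν.real Set.univ ≤ 1 :=
    (one_mem_Icc_mul_measureReal_univ (hr.comp measurable_prodMk_right) ha.le (hr_mem · z)
      (hκ z)).1
  refine (sqHellinger_bind_le P₁ P₂ hκ_meas hr ha hr_mem hκ).trans ?_
  rw [integral_Dl_sq_eq_integral_ofDensity hr hr_mem hab]
  set E := ∫ ω, Dl ((TestFamily.ofDensity (ν := ν) hr hr_mem).ℓ ω) P₁ P₂ ^ 2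
    ∂(TestFamily.ofDensity (ν := ν) hr hr_mem).ρ
  calc 1 / (8 * a) * (ν.real Set.univ * (b - a) ^ 2 * E)
      = (b - a) ^ 2 / (8 * a ^ 2) * (a * ν.real Set.univ * E) := by field_simp
    _ ≤ (b - a) ^ 2 / (8 * a ^ 2) * (1 * E) := by gcongr
    _ = (b - a) ^ 2 / (8 * a ^ 2) * E := by rw [one_mul]

lemma le_sqHellinger_bind_ofDensity [NeZero ν] [∀ z, IsProbabilityMeasure (κ z)]
    (hκ_meas : Measurable κ) (hr : Measurable (Function.uncurry r)) (ha : 0 ≤ a) (hab : a < b)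
    (hr_mem : ∀ o z, r o z ∈ Set.Icc a b)
    (hκ : ∀ z, κ z = ν.withDensity fun o => ENNReal.ofReal (r o z)) :
    (b - a) ^ 2 / (8 * b ^ 2) *
        ∫ ω, Dl ((TestFamily.ofDensity (ν := ν) hr hr_mem).ℓ ω) P₁ P₂ ^ 2
          ∂(TestFamily.ofDensity (ν := ν) hr hr_mem).ρ ≤
      sqHellinger (P₁.bind κ) (P₂.bind κ) := by
  obtain ⟨z⟩ := P₁.nonempty_of_neZero
  have hmass : 1 ≤ b * ν.real Set.univ :=
    (one_mem_Icc_mul_measureReal_univ (hr.comp measurable_prodMk_right) ha (hr_mem · z)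
      (hκ z)).2
  have hb : 0 < b := ha.trans_lt hab
  refine le_trans ?_ (le_sqHellinger_bind P₁ P₂ hκ_meas hr ha hr_mem hκ)
  rw [integral_Dl_sq_eq_integral_ofDensity hr hr_mem hab.ne]
  set E := ∫ ω, Dl ((TestFamily.ofDensity (ν := ν) hr hr_mem).ℓ ω) P₁ P₂ ^ 2
    ∂(TestFamily.ofDensity (ν := ν) hr hr_mem).ρ
  calc (b - a) ^ 2 / (8 * b ^ 2) * E
      = (b - a) ^ 2 / (8 * b ^ 2) * (1 * E) := by rw [one_mul]
    _ ≤ (b - a) ^ 2 / (8 * b ^ 2) * (b * ν.real Set.univ * E) := by gcongr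
    _ = 1 / (8 * b) * (ν.real Set.univ * (b - a) ^ 2 * E) := by field_simp

end BoundedDensity

theorem strong_data_processing_hellinger_general
    {Z : Type u} {O : Type v} [MeasurableSpace Z] [MeasurableSpace O]
    (α : ℝ) (hα : 0 < α)
    (Q : Kernel Z O) [IsMarkovKernel Q]
    (hDP : ∀ z z' : Z, ∀ E : Set O, MeasurableSet E →
      Q z E ≤ ENNReal.ofReal (Real.exp α) * Q z' E)
    (μ : Measure O) [SigmaFinite μ] (q : O → Z → ℝ≥0∞)
    (hq : Measurable (Function.uncurry q))
    (hdens : ∀ z : Z, Q z = μ.withDensity fun o => q o z) :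
    ∃ tf : TestFamily.{u, v} Z,
      ∀ P₁ P₂ : Measure Z, IsProbabilityMeasure P₁ → IsProbabilityMeasure P₂ →
        (Real.exp α - 1) ^ 2 / (8 * Real.exp (2 * α)) *
            ∫ ω, (Dl (tf.ℓ ω) P₁ P₂) ^ 2 ∂tf.ρ ≤
          sqHellinger (P₁.bind fun z => Q z) (P₂.bind fun z => Q z) ∧
        sqHellinger (P₁.bind fun z => Q z) (P₂.bind fun z => Q z) ≤
          (Real.exp α - 1) ^ 2 / 8 * ∫ ω, (Dl (tf.ℓ ω) P₁ P₂) ^ 2 ∂tf.ρ := by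
  rcases isEmpty_or_nonempty Z with hZ | ⟨⟨z₀⟩⟩
  · exact ⟨Classical.arbitrary _, fun P₁ _ _ _ => isEmptyElim P₁.nonempty_of_neZero.some⟩
  have hK : 1 < Real.exp α := Real.one_lt_exp_iff.2 hα
  obtain ⟨ν, hνQ, hQν⟩ : ∃ ν : Measure O, (∀ z, ν ≤ Q z) ∧
      ∀ z, Q z ≤ ENNReal.ofReal (Real.exp α) • ν :=
    ⟨⨅ z, Q z, iInf_le _, measure_le_smul_iInf (ENNReal.ofReal_pos.2 (Real.exp_pos α)).ne'
      ENNReal.ofReal_ne_top fun z z' => Measure.le_iff.2 (hDP z z')⟩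
  have hνμ : ν ≪ μ := (Measure.absolutelyContinuous_of_le (hνQ z₀)).trans
    (hdens z₀ ▸ withDensity_absolutelyContinuous μ _)
  have : IsFiniteMeasure ν := isFiniteMeasure_of_le (Q z₀) (hνQ z₀)
  have : NeZero ν := ⟨by
    rintro rfl
    exact IsProbabilityMeasure.ne_zero (Q z₀) <|
      Measure.nonpos_iff_eq_zero'.1 (by simpa using hQν z₀)⟩
  obtain ⟨r, hr, hr_mem, hQr⟩ := exists_measurable_density_mem_Icc hq hdens hνμ zero_le_one hK.le
    (by simpa using hνQ) hQν
  refine ⟨.ofDensity (ν := ν) hr hr_mem, fun P₁ P₂ _ _ => ⟨?_, ?_⟩⟩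
  · rw [two_mul, Real.exp_add, ← sq]
    exact le_sqHellinger_bind_ofDensity P₁ P₂ Q.measurable hr zero_le_one hK hr_mem hQr
  · simpa using sqHellinger_bind_le_ofDensity P₁ P₂ Q.measurable hr one_pos hK.ne hr_mem hQr

/-- **Strong data-processing inequality for locally private channels (Hellinger form).**
If `Q` is an `α`-DP channel from `Z` to `O` (admitting jointly measurable densities with
respect to a σ-finite measure `μ` on `O`, with measurable pointwise infimum), then there is
a probability space `(Ω, ρ)` and a jointly measurable family `(ℓ_ω)` of `[0,1]`-valued test
functions on `Z` such that for all probability measures `P₁, P₂` on `Z`,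
`((e^α − 1)²/(8 e^{2α})) E_ρ[D_{ℓ_ω}(P₁,P₂)²] ≤ D_H²(Q∘P₁, Q∘P₂)
  ≤ ((e^α − 1)²/8) E_ρ[D_{ℓ_ω}(P₁,P₂)²]`. -/
theorem strong_data_processing_hellinger
    {Z : Type u} {O : Type v} [MeasurableSpace Z] [MeasurableSpace O]
    (α : ℝ) (hα : 0 < α)
    (Q : Kernel Z O) [IsMarkovKernel Q]
    (hDP : ∀ z z' : Z, ∀ E : Set O, MeasurableSet E →
      Q z E ≤ ENNReal.ofReal (Real.exp α) * Q z' E)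
    (μ : Measure O) [SigmaFinite μ] (q : O → Z → ℝ≥0∞)
    (hq : Measurable (Function.uncurry q))
    (hdens : ∀ z : Z, Q z = μ.withDensity fun o => q o z)
    (hinf : Measurable fun o => ⨅ z : Z, q o z) :
    ∃ tf : TestFamily.{u, v} Z,
      ∀ P₁ P₂ : Measure Z, IsProbabilityMeasure P₁ → IsProbabilityMeasure P₂ →
        (Real.exp α - 1) ^ 2 / (8 * Real.exp (2 * α)) *
            ∫ ω, (Dl (tf.ℓ ω) P₁ P₂) ^ 2 ∂tf.ρ ≤
          sqHellinger (P₁.bind fun z => Q z) (P₂.bind fun z => Q z) ∧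
        sqHellinger (P₁.bind fun z => Q z) (P₂.bind fun z => Q z) ≤
          (Real.exp α - 1) ^ 2 / 8 * ∫ ω, (Dl (tf.ℓ ω) P₁ P₂) ^ 2 ∂tf.ρ :=
  strong_data_processing_hellinger_general α hα Q hDP μ q hq hdens
end

section
/- Hellinger distance to restricted supports: Let P be a probability measure on a measurable space O and let O₀ ⊆ O be a measurable set such that there exists at least one probability measure P′ on O with P′(O₀) = 1 (for instance, O₀ is nonempty and singletons are measurable). Then (1/2)·P(O \ O₀) ≤ inf{ D_H²(P′, P) : P′ a probability measure on O with P′(O₀) = 1 } ≤ P(O \ O₀). -/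
open MeasureTheory

/-!
Let `a`, `b` be the densities of `P'`, `P` with respect to `P' + P`. If `P' O₀ = 1`, then `a`
vanishes almost everywhere off `O₀`, so `(√a - √b)²` already integrates to `P O₀ᶜ` over `O₀ᶜ`.

Conversely, choose `P'` concentrated on `O₀` and dominating the restriction of `P` to `O₀`: the
conditional probability `P(· | O₀)`, or anything concentrated on `O₀` when `P O₀ = 0`. Then `b ≤ a`
on `O₀`, so `(√a - √b)² ≤ a - b` there, while `(√a - √b)² ≤ a + b` everywhere. Integrating over
`O₀` and `O₀ᶜ` gives `(P' O₀ - P O₀) + (P' O₀ᶜ + P O₀ᶜ) = 2 P O₀ᶜ`.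
-/

open scoped ProbabilityTheory

section SqrtInequalities

variable {a b : ℝ}

lemma sq_sqrt_sub_sqrt_le_add_s2 (ha : 0 ≤ a) (hb : 0 ≤ b) : (√a - √b) ^ 2 ≤ a + b := by
  have hab : 0 ≤ √a * √b := by positivity
  calc (√a - √b) ^ 2 = √a ^ 2 + √b ^ 2 - 2 * (√a * √b) := by ring
    _ = a + b - 2 * (√a * √b) := by rw [Real.sq_sqrt ha, Real.sq_sqrt hb]
    _ ≤ a + b := by linarith

lemma sq_sqrt_sub_sqrt_le_sub (hb : 0 ≤ b) (hba : b ≤ a) : (√a - √b) ^ 2 ≤ a - b := by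
  have hsqrt : √b * √b ≤ √a * √b := by gcongr
  calc (√a - √b) ^ 2 = √a ^ 2 - √b ^ 2 - 2 * (√a * √b - √b * √b) := by ring
    _ = a - b - 2 * (√a * √b - √b * √b) := by rw [Real.sq_sqrt (hb.trans hba), Real.sq_sqrt hb]
    _ ≤ a - b := by linarith

end SqrtInequalities

section RadonNikodym

variable {α : Type*} [MeasurableSpace α] {μ ν ρ : Measure α} {s : Set α}

lemma rnDeriv_ae_restrict_eq_zero_of_measure_eq_zero (ν : Measure α) (hs : μ s = 0) :
    μ.rnDeriv ν =ᵐ[ν.restrict s] 0 := by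
  rw [← lintegral_eq_zero_iff (μ.measurable_rnDeriv ν)]
  exact nonpos_iff_eq_zero.1 ((Measure.setLIntegral_rnDeriv_le s).trans_eq hs)

lemma rnDeriv_ae_restrict_le_of_restrict_le [SigmaFinite ρ] [ν.HaveLebesgueDecomposition ρ]
    (hνρ : ν ≪ ρ) (hμν : μ.restrict s ≤ ν) : μ.rnDeriv ρ ≤ᵐ[ρ.restrict s] ν.rnDeriv ρ := by
  refine ae_le_of_forall_setLIntegral_le_of_sigmaFinite (μ.measurable_rnDeriv ρ) fun t ht _ ↦ ?_
  rw [Measure.restrict_restrict ht]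
  calc ∫⁻ x in t ∩ s, μ.rnDeriv ρ x ∂ρ
      ≤ μ (t ∩ s) := Measure.setLIntegral_rnDeriv_le _
    _ = μ.restrict s (t ∩ s) := (Measure.restrict_eq_self μ Set.inter_subset_right).symm
    _ ≤ ν (t ∩ s) := hμν _
    _ = ∫⁻ x in t ∩ s, ν.rnDeriv ρ x ∂ρ := (Measure.setLIntegral_rnDeriv hνρ _).symm

end RadonNikodym

section Conditioning

variable {α : Type*} [MeasurableSpace α]

lemma restrict_le_cond (μ : Measure α) [IsZeroOrProbabilityMeasure μ] (s : Set α) :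
    μ.restrict s ≤ μ[|s] := by
  refine Measure.le_iff'.2 fun t ↦ ?_
  rw [ProbabilityTheory.cond, Measure.smul_apply, smul_eq_mul]
  exact le_mul_of_one_le_left' (ENNReal.one_le_inv.2 prob_le_one)

lemma exists_isProbabilityMeasure_restrict_le (μ : Measure α) [IsZeroOrProbabilityMeasure μ]
    {s : Set α} (hs : ∃ ν : Measure α, IsProbabilityMeasure ν ∧ ν s = 1) :
    ∃ ν : Measure α, IsProbabilityMeasure ν ∧ ν s = 1 ∧ μ.restrict s ≤ ν := by
  by_cases hμs : μ s = 0
  · obtain ⟨ν, hν, hνs⟩ := hs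
    exact ⟨ν, hν, hνs, (Measure.restrict_eq_zero.2 hμs).trans_le (Measure.zero_le ν)⟩
  · exact ⟨μ[|s], ProbabilityTheory.cond_isProbabilityMeasure hμs,
      ProbabilityTheory.cond_apply_self hμs (measure_ne_top μ s), restrict_le_cond μ s⟩

end Conditioning

section Hellinger

variable {O : Type*} [MeasurableSpace O]

/-- The integrand `(√(dP/dμ) - √(dQ/dμ))²`, with `μ = P + Q`, of twice the squared Hellinger
distance; its integral over a set is the contribution of that set to the distance. -/
noncomputable def sqHellingerIntegrand (P Q : Measure O) (o : O) : ℝ :=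
  (√(P.rnDeriv (P + Q) o).toReal - √(Q.rnDeriv (P + Q) o).toReal) ^ 2

lemma sqHellinger_eq_integral (P Q : Measure O) :
    sqHellinger P Q = (1 / 2) * ∫ o, sqHellingerIntegrand P Q o ∂(P + Q) :=
  rfl

lemma sqHellingerIntegrand_nonneg (P Q : Measure O) : 0 ≤ sqHellingerIntegrand P Q :=
  fun _ ↦ sq_nonneg _

lemma sqHellingerIntegrand_le_add (P Q : Measure O) (o : O) :
    sqHellingerIntegrand P Q o ≤ (P.rnDeriv (P + Q) o).toReal + (Q.rnDeriv (P + Q) o).toReal :=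
  sq_sqrt_sub_sqrt_le_add_s2 ENNReal.toReal_nonneg ENNReal.toReal_nonneg

lemma measurable_sqHellingerIntegrand (P Q : Measure O) :
    Measurable (sqHellingerIntegrand P Q) := by
  unfold sqHellingerIntegrand
  fun_prop

lemma setIntegral_sqHellingerIntegrand_of_measure_eq_zero {P Q : Measure O} [SigmaFinite P]
    [SigmaFinite Q] {s : Set O} (hs : P s = 0) :
    ∫ o in s, sqHellingerIntegrand P Q o ∂(P + Q) = Q.real s := by
  rw [← Measure.setIntegral_toReal_rnDeriv (Measure.AbsolutelyContinuous.rfl.add_right' P) s]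
  refine integral_congr_ae ?_
  filter_upwards [rnDeriv_ae_restrict_eq_zero_of_measure_eq_zero (P + Q) hs] with o ho
  simp [sqHellingerIntegrand, ho]

variable {P Q : Measure O} [IsFiniteMeasure P] [IsFiniteMeasure Q] {s : Set O}

lemma integrable_sqHellingerIntegrand : Integrable (sqHellingerIntegrand P Q) (P + Q) := by
  have hP : Integrable (fun o ↦ (P.rnDeriv (P + Q) o).toReal) (P + Q) :=
    Measure.integrable_toReal_rnDeriv
  have hQ : Integrable (fun o ↦ (Q.rnDeriv (P + Q) o).toReal) (P + Q) :=
    Measure.integrable_toReal_rnDeriv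
  refine (hP.add hQ).mono' (measurable_sqHellingerIntegrand P Q).aestronglyMeasurable
    (.of_forall fun o ↦ ?_)
  rw [Real.norm_of_nonneg (sqHellingerIntegrand_nonneg P Q o)]
  exact sqHellingerIntegrand_le_add P Q o

lemma setIntegral_sqHellingerIntegrand_le_add (s : Set O) :
    ∫ o in s, sqHellingerIntegrand P Q o ∂(P + Q) ≤ P.real s + Q.real s := by
  have hP : IntegrableOn (fun o ↦ (P.rnDeriv (P + Q) o).toReal) s (P + Q) :=
    Measure.integrable_toReal_rnDeriv.integrableOn
  have hQ : IntegrableOn (fun o ↦ (Q.rnDeriv (P + Q) o).toReal) s (P + Q) :=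
    Measure.integrable_toReal_rnDeriv.integrableOn
  rw [← Measure.setIntegral_toReal_rnDeriv (Measure.AbsolutelyContinuous.rfl.add_right Q) s,
    ← Measure.setIntegral_toReal_rnDeriv (Measure.AbsolutelyContinuous.rfl.add_right' P) s,
    ← integral_add hP hQ]
  exact integral_mono integrable_sqHellingerIntegrand.integrableOn (hP.add hQ)
    (sqHellingerIntegrand_le_add P Q)

lemma setIntegral_sqHellingerIntegrand_le_sub (hQP : Q.restrict s ≤ P) :
    ∫ o in s, sqHellingerIntegrand P Q o ∂(P + Q) ≤ P.real s - Q.real s := by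
  have hac : P ≪ P + Q := Measure.AbsolutelyContinuous.rfl.add_right Q
  have hP : IntegrableOn (fun o ↦ (P.rnDeriv (P + Q) o).toReal) s (P + Q) :=
    Measure.integrable_toReal_rnDeriv.integrableOn
  have hQ : IntegrableOn (fun o ↦ (Q.rnDeriv (P + Q) o).toReal) s (P + Q) :=
    Measure.integrable_toReal_rnDeriv.integrableOn
  rw [← Measure.setIntegral_toReal_rnDeriv hac s,
    ← Measure.setIntegral_toReal_rnDeriv (Measure.AbsolutelyContinuous.rfl.add_right' P) s,
    ← integral_sub hP hQ]
  refine integral_mono_ae integrable_sqHellingerIntegrand.integrableOn (hP.sub hQ) ?_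
  filter_upwards [rnDeriv_ae_restrict_le_of_restrict_le hac hQP,
    ae_restrict_of_ae (P.rnDeriv_ne_top (P + Q))] with o hle hne_top
  exact sq_sqrt_sub_sqrt_le_sub ENNReal.toReal_nonneg (ENNReal.toReal_mono hne_top hle)

lemma half_measureReal_le_sqHellinger_of_measure_eq_zero (hs : P s = 0) :
    (1 / 2) * Q.real s ≤ sqHellinger P Q := by
  rw [sqHellinger_eq_integral, ← setIntegral_sqHellingerIntegrand_of_measure_eq_zero hs]
  exact mul_le_mul_of_nonneg_left (setIntegral_le_integral integrable_sqHellingerIntegrand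
    (.of_forall (sqHellingerIntegrand_nonneg P Q))) (by norm_num)

lemma sqHellinger_le_of_restrict_le (hs : MeasurableSet s) (hQP : Q.restrict s ≤ P) :
    sqHellinger P Q ≤ (1 / 2) * (P.real Set.univ - Q.real s + Q.real sᶜ) := by
  rw [sqHellinger_eq_integral]
  gcongr
  calc ∫ o, sqHellingerIntegrand P Q o ∂(P + Q)
      = ∫ o in s, sqHellingerIntegrand P Q o ∂(P + Q)
          + ∫ o in sᶜ, sqHellingerIntegrand P Q o ∂(P + Q) :=
        (integral_add_compl hs integrable_sqHellingerIntegrand).symm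
    _ ≤ (P.real s - Q.real s) + (P.real sᶜ + Q.real sᶜ) :=
        add_le_add (setIntegral_sqHellingerIntegrand_le_sub hQP)
          (setIntegral_sqHellingerIntegrand_le_add sᶜ)
    _ = P.real Set.univ - Q.real s + Q.real sᶜ := by
        rw [← measureReal_add_measureReal_compl hs]
        ring

end Hellinger

lemma sqHellinger_le_measureReal_compl_of_restrict_le {O : Type*} [MeasurableSpace O]
    {P Q : Measure O} [IsProbabilityMeasure P] [IsProbabilityMeasure Q] {s : Set O}
    (hs : MeasurableSet s) (hQP : Q.restrict s ≤ P) : sqHellinger P Q ≤ Q.real sᶜ := by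
  refine (sqHellinger_le_of_restrict_le hs hQP).trans_eq ?_
  rw [probReal_univ, probReal_compl_eq_one_sub hs]
  ring

/-- **Hellinger distance to restricted supports.** For a probability measure `P` on `O` and
a measurable set `O₀ ⊆ O` supporting at least one probability measure,
`(1/2) P(O \ O₀) ≤ inf { D_H²(P', P) : P' a probability measure with P'(O₀) = 1 } ≤ P(O \ O₀)`. -/
theorem hellinger_dist_restricted_support
    {O : Type*} [MeasurableSpace O] (P : Measure O) [IsProbabilityMeasure P]
    (O₀ : Set O) (hO₀ : MeasurableSet O₀)
    (hne : ∃ P' : Measure O, IsProbabilityMeasure P' ∧ P' O₀ = 1) :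
    (1 / 2) * (P O₀ᶜ).toReal ≤
        sInf {x : ℝ | ∃ P' : Measure O, IsProbabilityMeasure P' ∧ P' O₀ = 1 ∧
          x = sqHellinger P' P} ∧
      sInf {x : ℝ | ∃ P' : Measure O, IsProbabilityMeasure P' ∧ P' O₀ = 1 ∧
          x = sqHellinger P' P} ≤ (P O₀ᶜ).toReal := by
  have hlower : (1 / 2) * P.real O₀ᶜ ∈ lowerBounds {x : ℝ | ∃ P' : Measure O,
      IsProbabilityMeasure P' ∧ P' O₀ = 1 ∧ x = sqHellinger P' P} := by
    rintro _ ⟨P', _, hP'O₀, rfl⟩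
    exact half_measureReal_le_sqHellinger_of_measure_eq_zero
      ((prob_compl_eq_zero_iff hO₀).2 hP'O₀)
  obtain ⟨P', hP', hP'O₀, hle⟩ := exists_isProbabilityMeasure_restrict_le P hne
  have hmem : sqHellinger P' P ∈ {x : ℝ | ∃ P' : Measure O,
      IsProbabilityMeasure P' ∧ P' O₀ = 1 ∧ x = sqHellinger P' P} := ⟨P', hP', hP'O₀, rfl⟩
  exact ⟨le_csInf ⟨_, hmem⟩ hlower,
    (csInf_le ⟨_, hlower⟩ hmem).trans
      (sqHellinger_le_measureReal_compl_of_restrict_le hO₀ hle)⟩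
end

section
/- Variational characterization of the Bhattacharyya coefficient with bounded test functions: Let Ψ be a countable set, let P, Q be probability distributions on Ψ, and define I_B(P,Q) := Σ_{ψ∈Ψ} √(P(ψ)·Q(ψ)). Then for every A > 0: I_B(P,Q)² ≤ inf{ (E_{ψ∼P} e^{f(ψ)})·(E_{ψ∼Q} e^{−f(ψ)}) : f : Ψ → ℝ with sup_ψ |f(ψ)| ≤ A } ≤ I_B(P,Q)² + 3·e^{−A}. -/
/-!
The lower bound is Cauchy–Schwarz for the tilted weights `p e^f` and `q e^{-f}`, because tilting
`p` and `q` in opposite directions leaves `√(p q)` unchanged.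

Without the bound on `f`, the infimum is approached by `e^f = √(q / p)`, for which both tilted
weights equal `√(p q)`. Truncating this choice to `[e^{-A}, e^A]` raises the first tilted weight to
at most `max √(p q) (p e^{-A})`, and likewise the second. If the total masses are at most `1`,
summation bounds the product by `(I + e^{-A})²`, where `I ≤ 1` is the Bhattacharyya coefficient.
-/

open Real

/-- The Bhattacharyya coefficient `I_B(p, q)` of two families of nonnegative weights, which need not
be normalized. The series converges as soon as `p` and `q` are summable. -/
noncomputable def bhattacharyyaCoeff {ι : Type*} (p q : ι → ℝ) : ℝ :=
  ∑' i, √(p i * q i)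

/-- The exponential tilt of the weights `p` by `f`, without renormalization: if `p` is a
probability distribution, its total mass is the expectation of `e^f` under `p`. -/
noncomputable def expTilt {ι : Type*} (p f : ι → ℝ) : ι → ℝ :=
  fun i => p i * exp (f i)

/-- The values of the variational problem: all products of the total masses of `p` tilted by `f`
and of `q` tilted by `-f`, where `|f| ≤ A`. -/
def tiltedMassProducts {ι : Type*} (p q : ι → ℝ) (A : ℝ) : Set ℝ :=
  {v | ∃ f : ι → ℝ, (∀ i, |f i| ≤ A) ∧ v = (∑' i, expTilt p f i) * ∑' i, expTilt q (-f) i}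

section PointwiseTruncation

/-- Here `t` is `b / a` truncated to `[m, m⁻¹]`, with `b / 0` read as `∞` when `b > 0`. -/
lemma exists_mem_Icc_mul_le_max {a b m : ℝ} (ha : 0 ≤ a) (hb : 0 ≤ b) (hm : 0 < m) (hm1 : m ≤ 1) :
    ∃ t ∈ Set.Icc m m⁻¹, a * t ≤ max b (a * m) ∧ b * t⁻¹ ≤ max a (b * m) := by
  have hmm : m ≤ m⁻¹ := hm1.trans (one_le_inv₀ hm |>.2 hm1)
  rcases le_or_gt b (a * m) with hba | hba
  · exact ⟨m, ⟨le_rfl, hmm⟩, le_max_right _ _, le_max_of_le_left ((mul_inv_le_iff₀ hm).2 hba)⟩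
  rcases le_or_gt a (b * m) with hab | hab
  · refine ⟨m⁻¹, ⟨hmm, le_rfl⟩, le_max_of_le_left ((mul_inv_le_iff₀ hm).2 hab), ?_⟩
    rw [inv_inv]
    exact le_max_right _ _
  have ha' : 0 < a := (mul_nonneg hb hm.le).trans_lt hab
  have hb' : 0 < b := (mul_nonneg ha hm.le).trans_lt hba
  refine ⟨b / a, ⟨?_, ?_⟩, le_max_of_le_left ?_, le_max_of_le_left ?_⟩
  · rw [le_div_iff₀ ha', mul_comm]
    exact hba.le
  · rw [div_le_iff₀ ha', inv_mul_eq_div, le_div_iff₀ hm]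
    exact hab.le
  · rw [mul_div_cancel₀ _ ha'.ne']
  · rw [inv_div, mul_div_cancel₀ _ hb'.ne']

lemma mul_le_max_sqrt_mul {p q t m : ℝ} (hp : 0 ≤ p) (h : √p * t ≤ max (√q) (√p * m)) :
    p * t ≤ max √(p * q) (p * m) :=
  calc p * t = √p * (√p * t) := by rw [← mul_assoc, mul_self_sqrt hp]
    _ ≤ √p * max (√q) (√p * m) := mul_le_mul_of_nonneg_left h (sqrt_nonneg p)
    _ = max √(p * q) (p * m) := by
      rw [mul_max_of_nonneg _ _ (sqrt_nonneg p), ← sqrt_mul hp, ← mul_assoc, mul_self_sqrt hp]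

lemma exists_abs_le_mul_exp_le_max {p q A : ℝ} (hp : 0 ≤ p) (hq : 0 ≤ q) (hA : 0 ≤ A) :
    ∃ x : ℝ, |x| ≤ A ∧ p * exp x ≤ max √(p * q) (p * exp (-A)) ∧
      q * exp (-x) ≤ max √(p * q) (q * exp (-A)) := by
  obtain ⟨t, ⟨hmt, htm⟩, hpt, hqt⟩ := exists_mem_Icc_mul_le_max (sqrt_nonneg p) (sqrt_nonneg q)
    (exp_pos (-A)) (exp_le_one_iff.2 (neg_nonpos.2 hA))
  have ht : 0 < t := (exp_pos _).trans_le hmt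
  rw [← exp_neg, neg_neg] at htm
  refine ⟨log t, abs_le.2 ⟨(le_log_iff_exp_le ht).2 hmt, (log_le_iff_le_exp ht).2 htm⟩, ?_, ?_⟩
  · rw [exp_log ht]
    exact mul_le_max_sqrt_mul hp hpt
  · rw [exp_neg, exp_log ht, mul_comm p q]
    exact mul_le_max_sqrt_mul hq hqt

end PointwiseTruncation

section Weights

variable {ι : Type*} {p q : ι → ℝ}

lemma bhattacharyyaCoeff_nonneg (p q : ι → ℝ) : 0 ≤ bhattacharyyaCoeff p q :=
  tsum_nonneg fun _ => sqrt_nonneg _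

lemma bhattacharyyaCoeff_comm (p q : ι → ℝ) :
    bhattacharyyaCoeff p q = bhattacharyyaCoeff q p := by
  simp only [bhattacharyyaCoeff, mul_comm]

lemma summable_sqrt_mul_and_bhattacharyyaCoeff_sq_le (hp0 : ∀ i, 0 ≤ p i) (hq0 : ∀ i, 0 ≤ q i)
    (hp : Summable p) (hq : Summable q) :
    (Summable fun i => √(p i * q i)) ∧
      bhattacharyyaCoeff p q ^ 2 ≤ (∑' i, p i) * ∑' i, q i := by
  have sqrt_rpow_two {r : ι → ℝ} (hr0 : ∀ i, 0 ≤ r i) : (fun i => √(r i) ^ (2 : ℝ)) = r :=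
    funext fun i => by rw [rpow_two, sq_sqrt (hr0 i)]
  have cauchy_schwarz := summable_and_inner_le_Lp_mul_Lq_tsum_of_nonneg HolderConjugate.two_two
    (fun i => sqrt_nonneg (p i)) (fun i => sqrt_nonneg (q i))
    (by rwa [sqrt_rpow_two hp0]) (by rwa [sqrt_rpow_two hq0])
  simp only [sqrt_rpow_two hp0, sqrt_rpow_two hq0, ← sqrt_mul (hp0 _), ← sqrt_eq_rpow,
    ← sqrt_mul (tsum_nonneg hp0)] at cauchy_schwarz
  exact ⟨cauchy_schwarz.1, (le_sqrt (bhattacharyyaCoeff_nonneg p q)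
    (mul_nonneg (tsum_nonneg hp0) (tsum_nonneg hq0))).1 cauchy_schwarz.2⟩

lemma expTilt_nonneg (hp0 : ∀ i, 0 ≤ p i) (f : ι → ℝ) (i : ι) : 0 ≤ expTilt p f i :=
  mul_nonneg (hp0 i) (exp_pos _).le

lemma summable_expTilt (hp0 : ∀ i, 0 ≤ p i) (hp : Summable p) {f : ι → ℝ} {A : ℝ}
    (hf : ∀ i, f i ≤ A) : Summable (expTilt p f) :=
  (hp.mul_right (exp A)).of_nonneg_of_le (expTilt_nonneg hp0 f) fun i =>
    mul_le_mul_of_nonneg_left (exp_le_exp.2 (hf i)) (hp0 i)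

lemma bhattacharyyaCoeff_expTilt_neg (p q f : ι → ℝ) :
    bhattacharyyaCoeff (expTilt p f) (expTilt q (-f)) = bhattacharyyaCoeff p q := by
  refine tsum_congr fun i => ?_
  rw [expTilt, expTilt, mul_mul_mul_comm, Pi.neg_apply, ← exp_add, add_neg_cancel, exp_zero,
    mul_one]

lemma bhattacharyyaCoeff_sq_mem_lowerBounds (hp0 : ∀ i, 0 ≤ p i) (hq0 : ∀ i, 0 ≤ q i)
    (hp : Summable p) (hq : Summable q) (A : ℝ) :
    bhattacharyyaCoeff p q ^ 2 ∈ lowerBounds (tiltedMassProducts p q A) := by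
  rintro _ ⟨f, hf, rfl⟩
  rw [← bhattacharyyaCoeff_expTilt_neg p q f]
  exact (summable_sqrt_mul_and_bhattacharyyaCoeff_sq_le (expTilt_nonneg hp0 f)
    (expTilt_nonneg hq0 (-f)) (summable_expTilt hp0 hp fun i => (abs_le.1 (hf i)).2)
    (summable_expTilt hq0 hq fun i => neg_le.1 (abs_le.1 (hf i)).1)).2

lemma tsum_expTilt_le (hp0 : ∀ i, 0 ≤ p i) (hp : Summable p)
    (hpq : Summable fun i => √(p i * q i)) {f : ι → ℝ} {c : ℝ} (hc : 0 ≤ c)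
    (hf : ∀ i, expTilt p f i ≤ max √(p i * q i) (p i * c)) :
    ∑' i, expTilt p f i ≤ bhattacharyyaCoeff p q + (∑' i, p i) * c := by
  have hle (i : ι) : expTilt p f i ≤ √(p i * q i) + p i * c :=
    (hf i).trans (max_le_add_of_nonneg (sqrt_nonneg _) (mul_nonneg (hp0 i) hc))
  have hsum := hpq.add (hp.mul_right c)
  calc ∑' i, expTilt p f i ≤ ∑' i, (√(p i * q i) + p i * c) :=
        (hsum.of_nonneg_of_le (expTilt_nonneg hp0 f) hle).tsum_le_tsum hle hsum
    _ = bhattacharyyaCoeff p q + (∑' i, p i) * c := by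
        rw [hpq.tsum_add (hp.mul_right c), tsum_mul_right, bhattacharyyaCoeff]

lemma exists_mem_tiltedMassProducts_le (hp0 : ∀ i, 0 ≤ p i) (hq0 : ∀ i, 0 ≤ q i)
    (hp : Summable p) (hq : Summable q) {A : ℝ} (hA : 0 ≤ A) :
    ∃ v ∈ tiltedMassProducts p q A,
      v ≤ (bhattacharyyaCoeff p q + (∑' i, p i) * exp (-A)) *
        (bhattacharyyaCoeff p q + (∑' i, q i) * exp (-A)) := by
  choose f hfA hfp hfq using fun i => exists_abs_le_mul_exp_le_max (hp0 i) (hq0 i) hA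
  have hpq := (summable_sqrt_mul_and_bhattacharyyaCoeff_sq_le hp0 hq0 hp hq).1
  have hp_le := tsum_expTilt_le hp0 hp hpq (exp_pos (-A)).le hfp
  have hq_le : ∑' i, expTilt q (-f) i ≤ bhattacharyyaCoeff p q + (∑' i, q i) * exp (-A) := by
    simp only [mul_comm (p _)] at hpq hfq
    rw [bhattacharyyaCoeff_comm]
    exact tsum_expTilt_le hq0 hq hpq (exp_pos (-A)).le hfq
  exact ⟨_, ⟨f, hfA, rfl⟩, mul_le_mul hp_le hq_le (tsum_nonneg (expTilt_nonneg hq0 (-f)))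
    ((tsum_nonneg (expTilt_nonneg hp0 f)).trans hp_le)⟩

theorem bhattacharyya_variational_general (hp0 : ∀ i, 0 ≤ p i) (hq0 : ∀ i, 0 ≤ q i)
    (hp : Summable p) (hq : Summable q) (hp1 : ∑' i, p i ≤ 1) (hq1 : ∑' i, q i ≤ 1)
    {A : ℝ} (hA : 0 ≤ A) :
    bhattacharyyaCoeff p q ^ 2 ≤ sInf (tiltedMassProducts p q A) ∧
      sInf (tiltedMassProducts p q A) ≤ bhattacharyyaCoeff p q ^ 2 + 3 * exp (-A) := by
  have hlower := bhattacharyyaCoeff_sq_mem_lowerBounds hp0 hq0 hp hq A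
  obtain ⟨v, hv, hv_le⟩ := exists_mem_tiltedMassProducts_le hp0 hq0 hp hq hA
  refine ⟨le_csInf ⟨v, hv⟩ hlower, csInf_le_of_le ⟨_, hlower⟩ hv ?_⟩
  have hI0 := bhattacharyyaCoeff_nonneg p q
  have hI1 : bhattacharyyaCoeff p q ≤ 1 := (sq_le_one_iff₀ hI0).1 <|
    (summable_sqrt_mul_and_bhattacharyyaCoeff_sq_le hp0 hq0 hp hq).2.trans
      (mul_le_one₀ hp1 (tsum_nonneg hq0) hq1)
  have hE1 : exp (-A) ≤ 1 := exp_le_one_iff.2 (neg_nonpos.2 hA)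
  calc v ≤ (bhattacharyyaCoeff p q + (∑' i, p i) * exp (-A)) *
        (bhattacharyyaCoeff p q + (∑' i, q i) * exp (-A)) := hv_le
    _ ≤ (bhattacharyyaCoeff p q + 1 * exp (-A)) * (bhattacharyyaCoeff p q + 1 * exp (-A)) := by
        have hq_mass : 0 ≤ ∑' i, q i := tsum_nonneg hq0
        gcongr
    _ = bhattacharyyaCoeff p q ^ 2 +
          (bhattacharyyaCoeff p q + bhattacharyyaCoeff p q + exp (-A)) * exp (-A) := by ring
    _ ≤ bhattacharyyaCoeff p q ^ 2 + 3 * exp (-A) := by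
        gcongr
        linarith

end Weights

lemma summable_toReal_pmf {Ψ : Type*} (P : PMF Ψ) : Summable fun ψ => (P ψ).toReal :=
  ENNReal.summable_toReal P.tsum_coe_ne_top

lemma tsum_toReal_pmf {Ψ : Type*} (P : PMF Ψ) : ∑' ψ, (P ψ).toReal = 1 := by
  rw [← ENNReal.tsum_toReal_eq P.apply_ne_top, P.tsum_coe, ENNReal.toReal_one]

/-- **Variational characterization of the Bhattacharyya coefficient with bounded test
functions.** For probability distributions `P, Q` on a countable set `Ψ`, writing
`I_B(P,Q) := Σ_ψ √(P(ψ) Q(ψ))`, one has, for every `A > 0`,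
`I_B(P,Q)² ≤ inf { (E_P e^f)(E_Q e^{−f}) : sup|f| ≤ A } ≤ I_B(P,Q)² + 3 e^{−A}`. -/
theorem bhattacharyya_variational {Ψ : Type*} [Countable Ψ]
    (P Q : PMF Ψ) (A : ℝ) (hA : 0 < A) :
    (∑' ψ, Real.sqrt ((P ψ).toReal * (Q ψ).toReal)) ^ 2 ≤
        sInf {v : ℝ | ∃ f : Ψ → ℝ, (∀ ψ, |f ψ| ≤ A) ∧
          v = (∑' ψ, (P ψ).toReal * Real.exp (f ψ)) *
              (∑' ψ, (Q ψ).toReal * Real.exp (-f ψ))} ∧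
      sInf {v : ℝ | ∃ f : Ψ → ℝ, (∀ ψ, |f ψ| ≤ A) ∧
          v = (∑' ψ, (P ψ).toReal * Real.exp (f ψ)) *
              (∑' ψ, (Q ψ).toReal * Real.exp (-f ψ))} ≤
        (∑' ψ, Real.sqrt ((P ψ).toReal * (Q ψ).toReal)) ^ 2 + 3 * Real.exp (-A) :=
  bhattacharyya_variational_general (fun _ => ENNReal.toReal_nonneg)
    (fun _ => ENNReal.toReal_nonneg) (summable_toReal_pmf P) (summable_toReal_pmf Q)
    (tsum_toReal_pmf P).le (tsum_toReal_pmf Q).le hA.le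
end

section
/- Posterior-Hellinger information inequality: Let O and Ψ be finite sets and let μ be a probability distribution over finitely many pairs (P, ψ), where each P is a probability distribution on O and ψ ∈ Ψ. Let 𝒫 denote the joint law of (o, ψ) obtained by drawing (P, ψ) ∼ μ and then o ∼ P. For each ψ in the support of the Ψ-marginal of μ let P_ψ := E_μ[P | ψ] (the conditional mixture of P given ψ), and let P̄ := E_μ[P] (the overall mixture). Then for every probability distribution w on Ψ: 4·E_{o∼𝒫}[ D_H²(𝒫(ψ = · | o), w) ] ≥ E_{ψ∼𝒫}[ D_H²(P_ψ, P̄) ]. -/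
/-- Squared Hellinger distance between two (sub)probability vectors on a finite set:
`D_H²(p, q) := (1/2) Σ_s (√(p s) − √(q s))²`. -/
noncomputable def hell2Fin {S : Type*} [Fintype S] (p q : S → ℝ) : ℝ :=
  (1 / 2) * ∑ s, (Real.sqrt (p s) - Real.sqrt (q s)) ^ 2

/-!
Multiplying the weights into the squares turns both sides into Hellinger distances between vectors
on `Ψ × O`: with `J` the joint law and `m`, `q` its marginals, the claim becomes
`D_H²(J, m ⊗ q) ≤ 4 D_H²(J, w ⊗ q)`, which holds for each label `ψ` separately. Insert `w ψ • q`
between `J ψ` and `m ψ • q`: squared Hellinger distance satisfies the triangle inequality up to a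
factor `2`, and since `q` has mass one the extra term `D_H²(w ψ • q, m ψ • q)` only depends on the
total masses `w ψ`, `m ψ`, so it is at most `D_H²(J ψ, w ψ • q)` by data processing.
-/

section Hellinger

variable {S T : Type*} [Fintype S] [Fintype T]

lemma hell2Fin_le_two_mul_add (p q r : S → ℝ) :
    hell2Fin p r ≤ 2 * (hell2Fin p q + hell2Fin q r) := by
  have pointwise (s : S) : (√(p s) - √(r s)) ^ 2 ≤
      2 * ((√(p s) - √(q s)) ^ 2 + (√(q s) - √(r s)) ^ 2) := by
    simpa only [sub_add_sub_cancel] using add_sq_le (a := √(p s) - √(q s)) (b := √(q s) - √(r s))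
  have summed := Finset.sum_le_sum fun s (_ : s ∈ Finset.univ) => pointwise s
  rw [← Finset.mul_sum, Finset.sum_add_distrib] at summed
  unfold hell2Fin
  linarith

lemma hell2Fin_mul_mul {a b : ℝ} (ha : 0 ≤ a) (hb : 0 ≤ b) {q : S → ℝ} (hq : ∀ s, 0 ≤ q s) :
    hell2Fin (fun s => a * q s) (fun s => b * q s) = 1 / 2 * (√a - √b) ^ 2 * ∑ s, q s := by
  simp only [hell2Fin, Real.sqrt_mul ha, Real.sqrt_mul hb, ← sub_mul, mul_pow, Real.sq_sqrt (hq _),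
    ← Finset.mul_sum, mul_assoc]

lemma hell2Fin_eq_sub_sum_sqrt_mul_sqrt {p q : S → ℝ} (hp : ∀ s, 0 ≤ p s) (hq : ∀ s, 0 ≤ q s) :
    hell2Fin p q = 1 / 2 * (∑ s, p s + ∑ s, q s) - ∑ s, √(p s) * √(q s) := by
  simp only [hell2Fin, sub_sq, Real.sq_sqrt (hp _), Real.sq_sqrt (hq _), Finset.sum_add_distrib,
    Finset.sum_sub_distrib, mul_assoc, ← Finset.mul_sum]
  ring

lemma half_sq_sqrt_sum_sub_sqrt_sum_le_hell2Fin {p q : S → ℝ} (hp : ∀ s, 0 ≤ p s)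
    (hq : ∀ s, 0 ≤ q s) :
    1 / 2 * (√(∑ s, p s) - √(∑ s, q s)) ^ 2 ≤ hell2Fin p q := by
  have cauchy_schwarz := Real.sum_sqrt_mul_sqrt_le Finset.univ hp hq
  rw [hell2Fin_eq_sub_sum_sqrt_mul_sqrt hp hq, sub_sq,
    Real.sq_sqrt (Finset.sum_nonneg fun s _ => hp s),
    Real.sq_sqrt (Finset.sum_nonneg fun s _ => hq s)]
  linarith

lemma sum_mul_hell2Fin_div_sum {p : S → ℝ} (hp : ∀ s, 0 ≤ p s) (q : S → ℝ) :
    (∑ s, p s) * hell2Fin (fun s => p s / ∑ t, p t) q =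
      hell2Fin p (fun s => (∑ t, p t) * q s) := by
  have mass_nonneg : 0 ≤ ∑ s, p s := Finset.sum_nonneg fun s _ => hp s
  rcases mass_nonneg.eq_or_lt with mass_zero | mass_pos
  · have p_zero (s : S) : p s = 0 :=
      (Finset.sum_eq_zero_iff_of_nonneg fun s _ => hp s).1 mass_zero.symm s (Finset.mem_univ s)
    simp [hell2Fin, p_zero]
  · have sqrt_mass_mul (s : S) : √(∑ t, p t) * √(p s / ∑ t, p t) = √(p s) := by
      rw [← Real.sqrt_mul mass_nonneg, mul_div_cancel₀ _ mass_pos.ne']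
    rw [hell2Fin, hell2Fin, mul_left_comm, Finset.mul_sum]
    congr! 2 with s
    rw [← sqrt_mass_mul, Real.sqrt_mul mass_nonneg, ← mul_sub, mul_pow, Real.sq_sqrt mass_nonneg]

lemma sum_hell2Fin_comm (p q : S → T → ℝ) :
    ∑ s, hell2Fin (p s) (q s) = ∑ t, hell2Fin (fun s => p s t) (fun s => q s t) := by
  simp only [hell2Fin, ← Finset.mul_sum]
  rw [Finset.sum_comm]

lemma hell2Fin_sum_mul_le_four_mul {p q : S → ℝ} (hp : ∀ s, 0 ≤ p s) (hq : ∀ s, 0 ≤ q s)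
    (hq1 : ∑ s, q s = 1) {a : ℝ} (ha : 0 ≤ a) :
    hell2Fin p (fun s => (∑ t, p t) * q s) ≤ 4 * hell2Fin p (fun s => a * q s) := by
  have triangle := hell2Fin_le_two_mul_add p (fun s => a * q s) (fun s => (∑ t, p t) * q s)
  have mass_change : hell2Fin (fun s => a * q s) (fun s => (∑ t, p t) * q s) ≤
      hell2Fin p (fun s => a * q s) := by
    have data_processing :=
      half_sq_sqrt_sum_sub_sqrt_sum_le_hell2Fin hp fun s => mul_nonneg ha (hq s)
    rw [← Finset.mul_sum, hq1, mul_one, sub_sq_comm] at data_processing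
    rwa [hell2Fin_mul_mul ha (Finset.sum_nonneg fun s _ => hp s) hq, hq1, mul_one]
  linarith

end Hellinger

theorem posterior_hellinger_information_general {O Ψ : Type*} [Fintype O] [Fintype Ψ]
    {J : Ψ → O → ℝ} (hJ0 : ∀ ψ o, 0 ≤ J ψ o) (hJ1 : ∑ ψ, ∑ o, J ψ o = 1)
    {w : Ψ → ℝ} (hw0 : ∀ ψ, 0 ≤ w ψ) :
    ∑ ψ, (∑ o, J ψ o) * hell2Fin (fun o => J ψ o / ∑ o', J ψ o') (fun o => ∑ ψ', J ψ' o) ≤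
      4 * ∑ o, (∑ ψ, J ψ o) * hell2Fin (fun ψ => J ψ o / ∑ ψ', J ψ' o) w := by
  have marginal_nonneg (o : O) : 0 ≤ ∑ ψ, J ψ o := Finset.sum_nonneg fun ψ _ => hJ0 ψ o
  have marginal_sum : ∑ o, ∑ ψ, J ψ o = 1 := by rw [Finset.sum_comm, hJ1]
  calc ∑ ψ, (∑ o, J ψ o) * hell2Fin (fun o => J ψ o / ∑ o', J ψ o') (fun o => ∑ ψ', J ψ' o)
    _ = ∑ ψ, hell2Fin (J ψ) (fun o => (∑ o', J ψ o') * ∑ ψ', J ψ' o) := by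
      simp only [sum_mul_hell2Fin_div_sum (hJ0 _)]
    _ ≤ ∑ ψ, 4 * hell2Fin (J ψ) (fun o => w ψ * ∑ ψ', J ψ' o) :=
      Finset.sum_le_sum fun ψ _ =>
        hell2Fin_sum_mul_le_four_mul (hJ0 ψ) marginal_nonneg marginal_sum (hw0 ψ)
    _ = 4 * ∑ o, hell2Fin (fun ψ => J ψ o) (fun ψ => (∑ ψ', J ψ' o) * w ψ) := by
      rw [← Finset.mul_sum, sum_hell2Fin_comm]
      simp only [mul_comm (w _)]
    _ = 4 * ∑ o, (∑ ψ, J ψ o) * hell2Fin (fun ψ => J ψ o / ∑ ψ', J ψ' o) w := by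
      simp only [sum_mul_hell2Fin_div_sum fun ψ => hJ0 ψ _]

section JointLaw

variable {O Ψ I : Type*} [Fintype I] [DecidableEq Ψ] {μ : I → ℝ} {P : I → O → ℝ}

/-- The law `𝒫` of `(ψ, o)` when `i` is drawn with weight `μ i`, `ψ = lab i` and `o ∼ P i`,
curried so that `jointLaw μ P lab ψ` is the unnormalised conditional mixture given `ψ`. -/
def jointLaw (μ : I → ℝ) (P : I → O → ℝ) (lab : I → Ψ) (ψ : Ψ) (o : O) : ℝ :=
  ∑ i, if lab i = ψ then μ i * P i o else 0

lemma jointLaw_nonneg (hμ0 : ∀ i, 0 ≤ μ i) (hP0 : ∀ i o, 0 ≤ P i o) (lab : I → Ψ) (ψ : Ψ) (o : O) :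
    0 ≤ jointLaw μ P lab ψ o :=
  Finset.sum_nonneg fun i _ => ite_nonneg (mul_nonneg (hμ0 i) (hP0 i o)) le_rfl

lemma sum_jointLaw_left [Fintype Ψ] (μ : I → ℝ) (P : I → O → ℝ) (lab : I → Ψ) (o : O) :
    ∑ ψ, jointLaw μ P lab ψ o = ∑ i, μ i * P i o := by
  simp only [jointLaw]
  rw [Finset.sum_comm]
  simp only [Finset.sum_ite_eq, Finset.mem_univ, if_true]

lemma sum_jointLaw_right [Fintype O] (hP1 : ∀ i, ∑ o, P i o = 1) (μ : I → ℝ) (lab : I → Ψ)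
    (ψ : Ψ) : ∑ o, jointLaw μ P lab ψ o = ∑ i, if lab i = ψ then μ i else 0 := by
  simp only [jointLaw]
  rw [Finset.sum_comm]
  congr! 1 with i
  split_ifs
  · rw [← Finset.mul_sum, hP1, mul_one]
  · exact Finset.sum_const_zero

lemma sum_sum_jointLaw [Fintype O] [Fintype Ψ] (hP1 : ∀ i, ∑ o, P i o = 1) (μ : I → ℝ)
    (lab : I → Ψ) : ∑ ψ, ∑ o, jointLaw μ P lab ψ o = ∑ i, μ i := by
  rw [Finset.sum_comm]
  simp only [sum_jointLaw_left]
  rw [Finset.sum_comm]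
  simp only [← Finset.mul_sum, hP1, mul_one]

end JointLaw

/-- **Posterior-Hellinger information inequality.** Let `μ` be a probability distribution
over finitely many pairs `(P, ψ)` (encoded by a finite index type `I`, weights `μ`, models
`P i ∈ Δ(O)` and labels `lab i ∈ Ψ`), and let `𝒫` be the joint law of `(o, ψ)` obtained by
drawing `(P, ψ) ∼ μ` and then `o ∼ P`.  Writing `P_ψ := E_μ[P | ψ]` and `P̄ := E_μ[P]`, one
has, for every probability vector `w` on `Ψ`:
`4 E_{o∼𝒫}[ D_H²(𝒫(ψ = ·|o), w) ] ≥ E_{ψ∼𝒫}[ D_H²(P_ψ, P̄) ]`. -/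
theorem posterior_hellinger_information
    {O Ψ I : Type*} [Fintype O] [Fintype Ψ] [Fintype I] [DecidableEq Ψ]
    (μ : I → ℝ) (hμ0 : ∀ i, 0 ≤ μ i) (hμ1 : ∑ i, μ i = 1)
    (P : I → O → ℝ) (hP0 : ∀ i o, 0 ≤ P i o) (hP1 : ∀ i, ∑ o, P i o = 1)
    (lab : I → Ψ)
    (w : Ψ → ℝ) (hw0 : ∀ ψ, 0 ≤ w ψ) (hw1 : ∑ ψ, w ψ = 1) :
    ∑ ψ0 : Ψ, (∑ i, if lab i = ψ0 then μ i else 0) *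
        hell2Fin (fun o => (∑ i, if lab i = ψ0 then μ i * P i o else 0) /
            (∑ i, if lab i = ψ0 then μ i else 0)) (fun o => ∑ i, μ i * P i o) ≤
      4 * ∑ o : O, (∑ i, μ i * P i o) *
          hell2Fin (fun ψ0 => (∑ i, if lab i = ψ0 then μ i * P i o else 0) /
              (∑ i, μ i * P i o)) w := by
  have joint_law_bound := posterior_hellinger_information_general (jointLaw_nonneg hμ0 hP0 lab)
    ((sum_sum_jointLaw hP1 μ lab).trans hμ1) hw0
  simp only [sum_jointLaw_right hP1, sum_jointLaw_left] at joint_law_bound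
  exact joint_law_bound
end

section
/- Existence of a normalizing positive-definite matrix (fixed-point lemma): Let d ≥ 1, λ₀ > 0, and let ν̄ be a Borel probability measure on ℝ^d supported on { x : ‖x‖ ≤ 1 and x ≠ 0 }. Then there exists a symmetric positive-definite matrix U ∈ ℝ^{d×d} satisfying E_{x∼ν̄}[ U x x^⊤ U / ‖Ux‖ ] + λ₀·U = I_d. In particular, taking traces, E_{x∼ν̄} ‖Ux‖ ≤ d. -/
/-!
The matrix is found variationally, as a maximiser of `log det U - E‖U X‖ - λ tr U`. The exponential
of this functional extends continuously to the positive semidefinite cone, vanishes on singular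
matrices and tends to `0` at infinity, so it attains its maximum at a positive definite `U`.

Put `P = E[U X Xᵀ U / ‖U X‖]` and `R = 1 - P - λ U`. Differentiating at `U` in a symmetric direction
`H` gives `tr (H U⁻¹ R) = 0`. As `R` is symmetric, `H = R` is allowed, and `tr (R U⁻¹ R) = 0` with
`U⁻¹` positive definite forces `R = 0`.
-/

open MeasureTheory

/-- The Euclidean norm on `ℝ^d` (vectors represented as `Fin d → ℝ`). -/
noncomputable def euclNorm {d : ℕ} (v : Fin d → ℝ) : ℝ := Real.sqrt (∑ i, v i ^ 2)

open Matrix Filter Topology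
open scoped RealInnerProductSpace

variable {n : Type*} [Fintype n]

section PosSemidef

lemma isClosed_setOf_posSemidef {n : Type*} [Finite n] :
    IsClosed {U : Matrix n n ℝ | U.PosSemidef} := by
  cases nonempty_fintype n
  simp only [posSemidef_iff_dotProduct_mulVec, Set.ofPred_and, Set.ofPred_forall]
  refine IsClosed.inter ?_ (isClosed_iInter fun x => ?_)
  · exact isClosed_eq (by fun_prop) continuous_id
  · exact isClosed_le continuous_const (by fun_prop)

lemma abs_apply_le_trace_of_posSemidef {U : Matrix n n ℝ} (hU : U.PosSemidef) (i j : n) :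
    |U i j| ≤ U.trace := by
  classical
  have diag_le_trace (k : n) : U k k ≤ U.trace :=
    Finset.single_le_sum (f := fun k => U k k) (fun k _ => hU.diag_nonneg) (Finset.mem_univ k)
  have symm : U j i = U i j := by simpa using hU.isHermitian.apply i j
  have quadratic_nonneg (c : ℝ) : 0 ≤ U i i + c * U i j + c * (U j i + c * U j j) := by
    have := hU.dotProduct_mulVec_nonneg (Pi.single i 1 + Pi.single j c)
    simp only [star_trivial, mulVec_add, mulVec_single, MulOpposite.op_one, one_smul,
      op_smul_eq_smul, dotProduct_add, add_dotProduct, single_dotProduct, col_apply, one_mul,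
      dotProduct_smul, smul_eq_mul] at this
    linarith
  rw [abs_le]
  constructor <;>
    linarith [quadratic_nonneg 1, quadratic_nonneg (-1), diag_le_trace i, diag_le_trace j]

lemma isCompact_setOf_posSemidef_trace_le (C : ℝ) :
    IsCompact {U : Matrix n n ℝ | U.PosSemidef ∧ U.trace ≤ C} := by
  have box_compact : IsCompact (Set.univ.pi fun _ => Set.univ.pi fun _ => Set.Icc (-C) C :
      Set (Matrix n n ℝ)) :=
    isCompact_univ_pi fun _ => isCompact_univ_pi fun _ => isCompact_Icc
  have closed : IsClosed {U : Matrix n n ℝ | U.PosSemidef ∧ U.trace ≤ C} :=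
    isClosed_setOf_posSemidef.inter (isClosed_le continuous_id.matrix_trace continuous_const)
  refine box_compact.of_isClosed_subset closed fun U hU i _ j _ => ?_
  exact abs_le.mp ((abs_apply_le_trace_of_posSemidef hU.1 i j).trans hU.2)

lemma tendsto_trace_cocompact_inf_posSemidef :
    Tendsto trace (cocompact (Matrix n n ℝ) ⊓ 𝓟 {U | U.PosSemidef}) atTop := by
  refine tendsto_atTop.mpr fun C => ?_
  rw [eventually_inf_principal]
  filter_upwards [(isCompact_setOf_posSemidef_trace_le C).compl_mem_cocompact] with U hU hpos
  exact le_of_not_ge fun hC => hU ⟨hpos, hC⟩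

lemma eventually_posDef_of_isHermitian {n : Type*} [Finite n] {U : Matrix n n ℝ}
    (hU : U.PosDef) : ∀ᶠ V in 𝓝 U, V.IsHermitian → V.PosDef := by
  cases nonempty_fintype n
  have pos_on_sphere : ∀ᶠ V in 𝓝 U, ∀ x ∈ Metric.sphere (0 : n → ℝ) 1, 0 < x ⬝ᵥ V *ᵥ x := by
    refine (isCompact_sphere 0 1).eventually_forall_of_forall_eventually fun x hx => ?_
    have form_continuous : Continuous fun z : Matrix n n ℝ × (n → ℝ) => z.2 ⬝ᵥ z.1 *ᵥ z.2 := by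
      fun_prop
    refine form_continuous.continuousAt.eventually (lt_mem_nhds ?_)
    simpa using hU.dotProduct_mulVec_pos (ne_zero_of_mem_unit_sphere ⟨x, hx⟩)
  filter_upwards [pos_on_sphere] with V hV hherm
  refine .of_dotProduct_mulVec_pos hherm fun x hx => ?_
  have hnorm : 0 < ‖x‖ := norm_pos_iff.mpr hx
  have hunit := hV (‖x‖⁻¹ • x) (by simp [norm_smul, hnorm.ne'])
  simp only [mulVec_smul, smul_dotProduct, dotProduct_smul, smul_eq_mul] at hunit
  simpa [hnorm] using hunit

open scoped ComplexOrder in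
lemma trace_conjTranspose_mul_mul_same_eq_zero_iff {m 𝕜 : Type*} [Fintype m] [RCLike 𝕜]
    {V : Matrix n n 𝕜} (hV : V.PosDef) {R : Matrix n m 𝕜} :
    (Rᴴ * V * R).trace = 0 ↔ R = 0 := by
  classical
  refine ⟨fun h => ?_, fun h => by simp [h]⟩
  have hzero : Rᴴ * V * R = 0 :=
    (hV.posSemidef.conjTranspose_mul_mul_same R).trace_eq_zero_iff.mp h
  ext i j
  by_contra hne
  have column_ne_zero : R *ᵥ Pi.single j 1 ≠ 0 := fun h => hne (by simpa using congrFun h i)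
  have hpos := hV.dotProduct_mulVec_pos column_ne_zero
  rw [star_mulVec, ← dotProduct_mulVec, mulVec_mulVec, mulVec_mulVec, hzero] at hpos
  simp at hpos

end PosSemidef

section Determinant

variable [DecidableEq n]

lemma det_le_trace_pow_of_posSemidef {U : Matrix n n ℝ} (hU : U.PosSemidef) :
    U.det ≤ U.trace ^ Fintype.card n := by
  have eigenvalue_le_trace (i : n) : hU.1.eigenvalues i ≤ U.trace := by
    rw [hU.1.trace_eq_sum_eigenvalues]
    exact Finset.single_le_sum (fun i _ => hU.eigenvalues_nonneg i) (Finset.mem_univ i)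
  calc U.det = ∏ i, hU.1.eigenvalues i := hU.1.det_eq_prod_eigenvalues
    _ ≤ ∏ _i : n, U.trace :=
        Finset.prod_le_prod (fun i _ => hU.eigenvalues_nonneg i) fun i _ => eigenvalue_le_trace i
    _ = U.trace ^ Fintype.card n := by simp

variable {𝕜 : Type*} [NontriviallyNormedField 𝕜]

lemma hasDerivAt_det_one_add_smul (A : Matrix n n 𝕜) :
    HasDerivAt (fun t : 𝕜 => (1 + t • A).det) A.trace 0 := by
  rw [funext fun t : 𝕜 => det_one_add_smul t A]
  have hderiv := (((hasDerivAt_id (0 : 𝕜)).const_mul A.trace).const_add 1).add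
    ((Polynomial.hasDerivAt (det (1 + (Polynomial.X : Polynomial 𝕜) •
      A.map Polynomial.C)).divX.divX 0).mul ((hasDerivAt_id (0 : 𝕜)).pow 2))
  exact hderiv.congr_deriv (by simp)

lemma hasDerivAt_det_add_smul {U : Matrix n n 𝕜} (hU : IsUnit U.det) (H : Matrix n n 𝕜) :
    HasDerivAt (fun t : 𝕜 => (U + t • H).det) (U.det * (U⁻¹ * H).trace) 0 := by
  have factor (t : 𝕜) : (U + t • H).det = U.det * (1 + t • (U⁻¹ * H)).det := by
    rw [← det_mul, mul_add, mul_one, mul_smul_comm, mul_nonsing_inv_cancel_left _ _ hU]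
  simp only [factor]
  exact (hasDerivAt_det_one_add_smul _).const_mul _

end Determinant

section ExpectedNorm

variable {Ω : Type*} [MeasurableSpace Ω] {μ : Measure Ω}

lemma continuous_integral_norm_clm_apply {𝕜 E F : Type*} [NontriviallyNormedField 𝕜]
    [NormedAddCommGroup E] [NormedSpace 𝕜 E] [NormedAddCommGroup F] [NormedSpace 𝕜 F]
    {X : Ω → E} (hX : Integrable X μ) :
    Continuous fun T : E →L[𝕜] F => ∫ ω, ‖T (X ω)‖ ∂μ := by
  refine (LipschitzWith.of_dist_le' (K := ∫ ω, ‖X ω‖ ∂μ) fun T S => ?_).continuous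
  have integrable_apply (T : E →L[𝕜] F) : Integrable (fun ω => ‖T (X ω)‖) μ :=
    (T.integrable_comp hX).norm
  calc dist (∫ ω, ‖T (X ω)‖ ∂μ) (∫ ω, ‖S (X ω)‖ ∂μ)
      = ‖∫ ω, ‖T (X ω)‖ - ‖S (X ω)‖ ∂μ‖ := by
        rw [dist_eq_norm, integral_sub (integrable_apply T) (integrable_apply S)]
    _ ≤ ∫ ω, ‖X ω‖ * dist T S ∂μ := by
        refine norm_integral_le_of_norm_le (hX.norm.mul_const _) (.of_forall fun ω => ?_)
        rw [dist_eq_norm, mul_comm]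
        exact (abs_norm_sub_norm_le _ _).trans ((T - S).le_opNorm (X ω))
    _ = (∫ ω, ‖X ω‖ ∂μ) * dist T S := integral_mul_const _ _

variable {F : Type*} [NormedAddCommGroup F] [InnerProductSpace ℝ F]

lemma hasDerivAt_norm_add_smul {y : F} (hy : y ≠ 0) (z : F) :
    HasDerivAt (fun t : ℝ => ‖y + t • z‖) (⟪y, z⟫ / ‖y‖) 0 := by
  have hline : HasDerivAt (fun t : ℝ => y + t • z) z 0 := by
    simpa using ((hasDerivAt_id (0 : ℝ)).smul_const z).const_add y
  have hsqrt := hline.norm_sq.sqrt (by simpa using hy)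
  simp only [Real.sqrt_sq (norm_nonneg _), zero_smul, add_zero] at hsqrt
  exact hsqrt.congr_deriv (mul_div_mul_left _ _ two_ne_zero)

lemma hasDerivAt_integral_norm_add_smul {Y Z : Ω → F} (hY : Integrable Y μ) (hZ : Integrable Z μ)
    (hY0 : ∀ᵐ ω ∂μ, Y ω ≠ 0) :
    HasDerivAt (fun t : ℝ => ∫ ω, ‖Y ω + t • Z ω‖ ∂μ) (∫ ω, ⟪Y ω, Z ω⟫ / ‖Y ω‖ ∂μ) 0 := by
  refine (hasDerivAt_integral_of_dominated_loc_of_lip (bound := fun ω => ‖Z ω‖) univ_mem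
    (.of_forall fun t => (hY.add (hZ.smul t)).norm.aestronglyMeasurable) (by simpa using hY.norm)
    ((hY.1.inner hZ.1).div₀ hY.1.norm) (.of_forall fun ω => ?_) hZ.norm
    (hY0.mono fun ω hω => hasDerivAt_norm_add_smul hω (Z ω))).2
  refine LipschitzOnWith.of_dist_le_mul fun t _ s _ => (dist_norm_norm_le _ _).trans_eq ?_
  simp [← sub_smul, norm_smul, Real.dist_eq, mul_comm]

end ExpectedNorm

section NormalizedSecondMoment

variable {Ω : Type*} [MeasurableSpace Ω] {μ : Measure Ω} {Y : Ω → EuclideanSpace ℝ n}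

/-- The matrix `E[Y Yᵀ / ‖Y‖]` of a random vector `Y`, with the expectation taken entrywise. For
`Y = U X` with `U` symmetric it is `E[U X Xᵀ U / ‖U X‖]`. -/
noncomputable def normalizedSecondMoment (Y : Ω → EuclideanSpace ℝ n) (μ : Measure Ω) :
    Matrix n n ℝ :=
  .of fun i j => ∫ ω, Y ω i * Y ω j / ‖Y ω‖ ∂μ

lemma isHermitian_normalizedSecondMoment : (normalizedSecondMoment Y μ).IsHermitian := by
  ext i j
  simp [normalizedSecondMoment, mul_comm]

lemma integrable_apply_mul_apply_div_norm (hY : Integrable Y μ) (i j : n) :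
    Integrable (fun ω => Y ω i * Y ω j / ‖Y ω‖) μ := by
  have coord_measurable (k : n) : AEStronglyMeasurable (fun ω => Y ω k) μ :=
    (EuclideanSpace.proj (𝕜 := ℝ) k).continuous.comp_aestronglyMeasurable hY.1
  refine hY.mono (((coord_measurable i).mul (coord_measurable j)).div₀ hY.1.norm)
    (.of_forall fun ω => ?_)
  rw [norm_div, norm_mul, norm_norm]
  refine div_le_of_le_mul₀ (norm_nonneg _) (norm_nonneg _) ?_
  gcongr <;> exact PiLp.norm_apply_le (Y ω) _

lemma integral_inner_toEuclideanCLM_div_norm [DecidableEq n] (hY : Integrable Y μ)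
    (B : Matrix n n ℝ) :
    ∫ ω, ⟪Y ω, toEuclideanCLM (𝕜 := ℝ) B (Y ω)⟫ / ‖Y ω‖ ∂μ =
      (B * normalizedSecondMoment Y μ).trace := by
  have expand (ω : Ω) : ⟪Y ω, toEuclideanCLM (𝕜 := ℝ) B (Y ω)⟫ / ‖Y ω‖ =
      ∑ i, ∑ j, B i j * (Y ω j * Y ω i / ‖Y ω‖) := by
    simp only [inner_toEuclideanCLM, dotProduct, mulVec, Finset.sum_div, Finset.mul_sum]
    exact Finset.sum_congr rfl fun i _ => Finset.sum_congr rfl fun j _ => by ring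
  have integrable_term (i j : n) : Integrable (fun ω => B i j * (Y ω j * Y ω i / ‖Y ω‖)) μ :=
    (integrable_apply_mul_apply_div_norm hY j i).const_mul _
  simp only [expand, trace, diag, mul_apply, normalizedSecondMoment, of_apply]
  rw [integral_finsetSum _ fun i _ => integrable_finsetSum _ fun j _ => integrable_term i j]
  simp only [integral_finsetSum _ fun j _ => integrable_term _ j, integral_const_mul]

lemma trace_normalizedSecondMoment (hY : Integrable Y μ) :
    (normalizedSecondMoment Y μ).trace = ∫ ω, ‖Y ω‖ ∂μ := by
  classical
  simpa [pow_two, mul_self_div_self] using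
    (integral_inner_toEuclideanCLM_div_norm hY 1).symm

end NormalizedSecondMoment

section Potential

variable [DecidableEq n] {Ω : Type*} [MeasurableSpace Ω] {μ : Measure Ω}
  {X : Ω → EuclideanSpace ℝ n} {lam : ℝ} {U : Matrix n n ℝ}

/-- The functional `det U · exp (-E‖U X‖ - λ tr U)`, whose maximiser over the positive semidefinite
cone is the normalizing matrix of `X`. It is the exponential of the functional
`log det U - E‖U X‖ - λ tr U`, chosen because it is continuous at singular `U` as well. -/
noncomputable def normalizingPotential (lam : ℝ) (X : Ω → EuclideanSpace ℝ n) (μ : Measure Ω)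
    (U : Matrix n n ℝ) : ℝ :=
  U.det * Real.exp (-(∫ ω, ‖toEuclideanCLM (𝕜 := ℝ) U (X ω)‖ ∂μ) - lam * U.trace)

lemma normalizingPotential_pos (hU : U.PosDef) : 0 < normalizingPotential lam X μ U :=
  mul_pos hU.det_pos (Real.exp_pos _)

lemma continuous_normalizingPotential (hX : Integrable X μ) :
    Continuous (normalizingPotential lam X μ) := by
  have toCLM_continuous : Continuous (toEuclideanCLM (n := n) (𝕜 := ℝ)) :=
    LinearMap.continuous_of_finiteDimensional
      (toEuclideanCLM (n := n) (𝕜 := ℝ)).toAlgEquiv.toLinearMap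
  have expectation_continuous :
      Continuous fun U : Matrix n n ℝ => ∫ ω, ‖toEuclideanCLM (𝕜 := ℝ) U (X ω)‖ ∂μ :=
    (continuous_integral_norm_clm_apply hX).comp toCLM_continuous
  unfold normalizingPotential
  fun_prop

lemma normalizingPotential_le (hU : U.PosSemidef) :
    normalizingPotential lam X μ U ≤
      U.trace ^ (Fintype.card n : ℝ) * Real.exp (-lam * U.trace) := by
  have expectation_nonneg : 0 ≤ ∫ ω, ‖toEuclideanCLM (𝕜 := ℝ) U (X ω)‖ ∂μ :=
    integral_nonneg fun _ => norm_nonneg _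
  rw [normalizingPotential, Real.rpow_natCast]
  gcongr
  · exact pow_nonneg hU.trace_nonneg _
  · exact det_le_trace_pow_of_posSemidef hU
  · linarith

lemma tendsto_normalizingPotential_cocompact_inf_posSemidef (hlam : 0 < lam) :
    Tendsto (normalizingPotential lam X μ) (cocompact (Matrix n n ℝ) ⊓ 𝓟 {U | U.PosSemidef})
      (𝓝 0) := by
  have bound_tendsto :=
    (tendsto_rpow_mul_exp_neg_mul_atTop_nhds_zero (Fintype.card n) lam hlam).comp
      (tendsto_trace_cocompact_inf_posSemidef (n := n))
  have hpos : ∀ᶠ U in cocompact (Matrix n n ℝ) ⊓ 𝓟 {U | U.PosSemidef}, U.PosSemidef :=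
    mem_inf_of_right (mem_principal_self _)
  exact squeeze_zero' (hpos.mono fun U hU => mul_nonneg hU.det_nonneg (Real.exp_nonneg _))
    (hpos.mono fun U hU => normalizingPotential_le hU) bound_tendsto

lemma exists_posDef_isMaxOn_normalizingPotential (hlam : 0 < lam) (hX : Integrable X μ) :
    ∃ U : Matrix n n ℝ, U.PosDef ∧
      IsMaxOn (normalizingPotential lam X μ) {V | V.PosSemidef} U := by
  have one_pos : 0 < normalizingPotential lam X μ 1 := normalizingPotential_pos .one
  have le_one_at_infinity := (tendsto_normalizingPotential_cocompact_inf_posSemidef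
    (X := X) (μ := μ) hlam).eventually (ge_mem_nhds one_pos)
  obtain ⟨U, hU, hmax⟩ := (continuous_normalizingPotential hX).continuousOn.exists_isMaxOn'
    isClosed_setOf_posSemidef PosSemidef.one le_one_at_infinity
  have max_pos : 0 < normalizingPotential lam X μ U := one_pos.trans_le (hmax PosSemidef.one)
  exact ⟨U, hU.posDef_iff_det_ne_zero.mpr (left_ne_zero_of_mul max_pos.ne'), hmax⟩

lemma ae_toEuclideanCLM_apply_ne_zero (hU : IsUnit U) (hX0 : ∀ᵐ ω ∂μ, X ω ≠ 0) :
    ∀ᵐ ω ∂μ, toEuclideanCLM (𝕜 := ℝ) U (X ω) ≠ 0 := by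
  filter_upwards [hX0] with ω hω hzero
  refine hω (WithLp.ofLp_injective 2 (mulVec_injective_iff_isUnit.mpr hU ?_))
  simpa using congrArg WithLp.ofLp hzero

lemma hasDerivAt_normalizingPotential_add_smul (hX : Integrable X μ) (hX0 : ∀ᵐ ω ∂μ, X ω ≠ 0)
    (hU : IsUnit U) (H : Matrix n n ℝ) :
    HasDerivAt (fun t : ℝ => normalizingPotential lam X μ (U + t • H))
      (normalizingPotential lam X μ U * ((U⁻¹ * H).trace -
        (∫ ω, ⟪toEuclideanCLM (𝕜 := ℝ) U (X ω), toEuclideanCLM (𝕜 := ℝ) H (X ω)⟫ /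
          ‖toEuclideanCLM (𝕜 := ℝ) U (X ω)‖ ∂μ) - lam * H.trace)) 0 := by
  have det_deriv := hasDerivAt_det_add_smul ((isUnit_iff_isUnit_det U).mp hU) H
  have norm_deriv := hasDerivAt_integral_norm_add_smul
    ((toEuclideanCLM (𝕜 := ℝ) U).integrable_comp hX)
    ((toEuclideanCLM (𝕜 := ℝ) H).integrable_comp hX) (ae_toEuclideanCLM_apply_ne_zero hU hX0)
  have trace_deriv : HasDerivAt (fun t : ℝ => U.trace + t * H.trace) H.trace 0 := by
    simpa using ((hasDerivAt_id (0 : ℝ)).mul_const H.trace).const_add U.trace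
  have product_deriv := det_deriv.mul (norm_deriv.neg.sub (trace_deriv.const_mul lam)).exp
  simp only [normalizingPotential, map_add, map_smul, _root_.add_apply,
    _root_.smul_apply, trace_add, trace_smul, smul_eq_mul]
  refine product_deriv.congr_deriv ?_
  simp only [Pi.sub_apply, Pi.neg_apply, zero_smul, add_zero, zero_mul]
  ring

lemma trace_mul_inv_mul_residual_eq_zero (hX : Integrable X μ) (hX0 : ∀ᵐ ω ∂μ, X ω ≠ 0)
    (hU : U.PosDef) (hmax : IsMaxOn (normalizingPotential lam X μ) {V | V.PosSemidef} U)
    {H : Matrix n n ℝ} (hH : H.IsHermitian) :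
    (H * U⁻¹ * (1 - normalizedSecondMoment (fun ω => toEuclideanCLM (𝕜 := ℝ) U (X ω)) μ -
      lam • U)).trace = 0 := by
  have hdet : IsUnit U.det := (isUnit_iff_isUnit_det U).mp hU.isUnit
  have local_max : IsLocalMax (fun t : ℝ => normalizingPotential lam X μ (U + t • H)) 0 := by
    have line_tendsto : Tendsto (fun t : ℝ => U + t • H) (𝓝 0) (𝓝 U) :=
      Continuous.tendsto' (by fun_prop) _ _ (by simp)
    filter_upwards [line_tendsto.eventually (eventually_posDef_of_isHermitian hU)] with t ht
    have hherm : (U + t • H).IsHermitian := hU.1.add (hH.smul (.all t))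
    simpa using hmax (ht hherm).posSemidef
  have deriv_eq_zero := local_max.hasDerivAt_eq_zero
    (hasDerivAt_normalizingPotential_add_smul hX hX0 hU.isUnit H)
  have stationary := (mul_eq_zero_iff_left (normalizingPotential_pos hU).ne').mp deriv_eq_zero
  have direction_apply (ω : Ω) : toEuclideanCLM (𝕜 := ℝ) H (X ω) =
      toEuclideanCLM (𝕜 := ℝ) (H * U⁻¹) (toEuclideanCLM (𝕜 := ℝ) U (X ω)) := by
    rw [← mul_apply_eq_comp, ← map_mul, nonsing_inv_mul_cancel_right _ _ hdet]
  simp only [direction_apply] at stationary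
  rw [integral_inner_toEuclideanCLM_div_norm ((toEuclideanCLM (𝕜 := ℝ) U).integrable_comp hX),
    trace_mul_comm] at stationary
  rw [mul_sub, mul_sub, mul_one, mul_smul_comm, nonsing_inv_mul_cancel_right _ _ hdet, trace_sub,
    trace_sub, trace_smul, smul_eq_mul, stationary]

lemma normalizedSecondMoment_add_smul_eq_one_of_isMaxOn (hX : Integrable X μ)
    (hX0 : ∀ᵐ ω ∂μ, X ω ≠ 0) (hU : U.PosDef)
    (hmax : IsMaxOn (normalizingPotential lam X μ) {V | V.PosSemidef} U) :
    normalizedSecondMoment (fun ω => toEuclideanCLM (𝕜 := ℝ) U (X ω)) μ + lam • U = 1 := by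
  set P := normalizedSecondMoment (fun ω => toEuclideanCLM (𝕜 := ℝ) U (X ω)) μ
  have residual_isHermitian : (1 - P - lam • U).IsHermitian :=
    (isHermitian_one.sub isHermitian_normalizedSecondMoment).sub (hU.1.smul (.all lam))
  have trace_eq_zero := trace_mul_inv_mul_residual_eq_zero hX hX0 hU hmax residual_isHermitian
  nth_rw 1 [← residual_isHermitian.eq] at trace_eq_zero
  have residual_eq_zero := (trace_conjTranspose_mul_mul_same_eq_zero_iff hU.inv).mp trace_eq_zero
  rw [sub_sub, sub_eq_zero] at residual_eq_zero
  exact residual_eq_zero.symm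

end Potential

theorem exists_normalizing_posdef_matrix_general [DecidableEq n] {Ω : Type*} [MeasurableSpace Ω]
    {μ : Measure Ω} {X : Ω → EuclideanSpace ℝ n} {lam : ℝ} (hlam : 0 < lam)
    (hX : Integrable X μ) (hX0 : ∀ᵐ ω ∂μ, X ω ≠ 0) :
    ∃ U : Matrix n n ℝ, U.PosDef ∧
      normalizedSecondMoment (fun ω => toEuclideanCLM (𝕜 := ℝ) U (X ω)) μ + lam • U = 1 ∧
      ∫ ω, ‖toEuclideanCLM (𝕜 := ℝ) U (X ω)‖ ∂μ ≤ Fintype.card n := by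
  obtain ⟨U, hU, hmax⟩ := exists_posDef_isMaxOn_normalizingPotential hlam hX
  have fixed_point := normalizedSecondMoment_add_smul_eq_one_of_isMaxOn hX hX0 hU hmax
  refine ⟨U, hU, fixed_point, ?_⟩
  have trace_eq := congrArg trace fixed_point
  rw [trace_add, trace_normalizedSecondMoment ((toEuclideanCLM (𝕜 := ℝ) U).integrable_comp hX),
    trace_smul, trace_one, smul_eq_mul] at trace_eq
  linarith [mul_nonneg hlam.le hU.posSemidef.trace_nonneg]

lemma euclNorm_eq_norm_toLp {d : ℕ} (v : Fin d → ℝ) : euclNorm v = ‖WithLp.toLp 2 v‖ := by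
  simp [euclNorm, EuclideanSpace.norm_eq]

lemma ae_norm_toLp_le_one_and_toLp_ne_zero {d : ℕ} {ν : Measure (Fin d → ℝ)}
    [IsProbabilityMeasure ν] (hsupp : ν {x | euclNorm x ≤ 1 ∧ x ≠ 0} = 1) :
    ∀ᵐ x ∂ν, ‖WithLp.toLp 2 x‖ ≤ 1 ∧ WithLp.toLp 2 x ≠ 0 := by
  simp only [euclNorm_eq_norm_toLp] at hsupp
  have hmeas : MeasurableSet {x : Fin d → ℝ | ‖WithLp.toLp 2 x‖ ≤ 1 ∧ x ≠ 0} :=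
    (measurableSet_le (WithLp.measurable_toLp 2 _).norm measurable_const).inter
      (measurableSet_singleton 0).compl
  filter_upwards [(mem_ae_iff_prob_eq_one hmeas).mpr hsupp] with x hx
  exact ⟨hx.1, by simpa using hx.2⟩

/-- **Existence of a normalizing positive-definite matrix (fixed-point lemma).**
For `d ≥ 1`, `λ₀ > 0` and a Borel probability measure `ν̄` on `ℝ^d` supported on
`{x : ‖x‖ ≤ 1, x ≠ 0}`, there is a symmetric positive-definite matrix `U` with
`E_{x∼ν̄}[U x xᵀ U / ‖Ux‖] + λ₀ U = I_d` (entrywise); in particular (taking traces)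
`E_{x∼ν̄} ‖Ux‖ ≤ d`. -/
theorem exists_normalizing_posdef_matrix
    (d : ℕ) (hd : 1 ≤ d) (lam : ℝ) (hlam : 0 < lam)
    (ν : Measure (Fin d → ℝ)) [IsProbabilityMeasure ν]
    (hsupp : ν {x | euclNorm x ≤ 1 ∧ x ≠ 0} = 1) :
    ∃ U : Matrix (Fin d) (Fin d) ℝ, U.PosDef ∧
      (∀ i j : Fin d,
        (∫ x, U.mulVec x i * U.mulVec x j / euclNorm (U.mulVec x) ∂ν) + lam * U i j =
          (1 : Matrix (Fin d) (Fin d) ℝ) i j) ∧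
      (∫ x, euclNorm (U.mulVec x) ∂ν) ≤ d := by
  have hae := ae_norm_toLp_le_one_and_toLp_ne_zero hsupp
  have integrable_toLp : Integrable (WithLp.toLp 2 : (Fin d → ℝ) → EuclideanSpace ℝ (Fin d)) ν :=
    .of_bound (Continuous.aestronglyMeasurable (by fun_prop)) 1 (hae.mono fun _ hx => hx.1)
  obtain ⟨U, hU, fixed_point, norm_le⟩ :=
    exists_normalizing_posdef_matrix_general hlam integrable_toLp (hae.mono fun _ hx => hx.2)
  simp only [euclNorm_eq_norm_toLp]
  exact ⟨U, hU, fun i j => congrFun₂ fixed_point i j, by simpa using norm_le⟩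
end

section
/- Quantile private PAC-DEC of two-point subclasses dominates the local DEC: Let Π be a decision space with measurable singletons, Z a measurable space, M a class of models M : Π → Δ(Z), L : M × Π → [0,∞) a loss, and M₀ ∈ M. Define the local DEC p-dec^{loc}_ε(M, M₀) := sup{ inf_{π∈Π} ( L(M₁,π) + L(M₀,π) ) : M₁ ∈ M, sup_{π∈Π} D_TV( M₁(π), M₀(π) ) ≤ ε }. Then for every ε > 0: sup_{M₁∈M} p-dec^{q,LDP}_{ε, 1/2}( {M₁, M₀}, M₀ ) ≥ (1/2)·p-dec^{loc}_ε(M, M₀). -/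
open MeasureTheory
open scoped ENNReal

/-- A distribution `q ∈ Δ(Θ × L)` over pairs of a decision and a measurable `[0,1]`-valued
test function on `Z`. -/
def IsTestDist {Θ Z : Type*} [MeasurableSpace Θ] [MeasurableSpace Z]
    (q : Measure (Θ × (Z → ℝ))) : Prop :=
  IsProbabilityMeasure q ∧
    q {pl | Measurable pl.2 ∧ ∀ z, pl.2 z ∈ Set.Icc (0 : ℝ) 1} = 1

/-- `E_{(π,ℓ)∼q} D_ℓ(M_i(π), M̄(π))²`. -/
noncomputable def testErr {Θ Z ι : Type*} [MeasurableSpace Θ] [MeasurableSpace Z]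
    (Ms : ι → Θ → Measure Z) (Mb : Θ → Measure Z)
    (q : Measure (Θ × (Z → ℝ))) (i : ι) : ℝ :=
  ∫ pl, (Dl pl.2 (Ms i pl.1) (Mb pl.1)) ^ 2 ∂q

/-- The private PAC-DEC of the model class `(Ms i)_{i : ι}` with loss `loss` and reference
model `Mb`:
`p-dec^{LDP}_ε(M, M̄) := inf_{p ∈ Δ(Θ), q ∈ Δ(Θ×L)}
  sup { E_{π∼p} L(M,π) : M ∈ M, E_{(π,ℓ)∼q} D_ℓ(M(π), M̄(π))² ≤ ε² }`,
where the supremum over the empty set is `−∞` (i.e. `⊥` in `EReal`). -/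
noncomputable def pdecLDP {Θ Z ι : Type*} [MeasurableSpace Θ] [MeasurableSpace Z]
    (Ms : ι → Θ → Measure Z) (loss : ι → Θ → ℝ) (Mb : Θ → Measure Z) (ε : ℝ) : EReal :=
  ⨅ (p : {p : Measure Θ // IsProbabilityMeasure p})
    (q : {q : Measure (Θ × (Z → ℝ)) // IsTestDist q}),
    sSup {x : EReal | ∃ i : ι, testErr Ms Mb q.1 i ≤ ε ^ 2 ∧
      x = ((∫ π, loss i π ∂p.1 : ℝ) : EReal)}

/-- Total variation distance `D_TV(P,Q) := sup_E |P(E) − Q(E)|`. -/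
noncomputable def TVdist {Z : Type*} [MeasurableSpace Z] (P Q : Measure Z) : ℝ :=
  ⨆ E : {E : Set Z // MeasurableSet E}, |(P E.1).toReal - (Q E.1).toReal|

/-- The `δ`-quantile loss of `p ∈ Δ(Θ)` under the loss `loss`:
`g^δ(p) := sup { Δ ≥ 0 : P_{π∼p}(loss(π) ≥ Δ) ≥ δ }` (valued in the extended reals). -/
noncomputable def quantileLoss {Θ : Type*} [MeasurableSpace Θ]
    (loss : Θ → ℝ) (p : Measure Θ) (δ : ℝ) : EReal :=
  sSup {x : EReal | ∃ Δ : ℝ, 0 ≤ Δ ∧ δ ≤ (p {π | Δ ≤ loss π}).toReal ∧ x = ((Δ : ℝ) : EReal)}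

/-- The quantile private PAC-DEC `p-dec^{q,LDP}_{ε,δ}(M, M̄)`: defined exactly as
`p-dec^{LDP}_ε(M, M̄)` but with `E_{π∼p} L(M,π)` replaced by the `δ`-quantile loss. -/
noncomputable def qpdecLDP {Θ Z ι : Type*} [MeasurableSpace Θ] [MeasurableSpace Z]
    (Ms : ι → Θ → Measure Z) (loss : ι → Θ → ℝ) (Mb : Θ → Measure Z) (ε δ : ℝ) : EReal :=
  ⨅ (p : {p : Measure Θ // IsProbabilityMeasure p})
    (q : {q : Measure (Θ × (Z → ℝ)) // IsTestDist q}),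
    sSup {x : EReal | ∃ i : ι, testErr Ms Mb q.1 i ≤ ε ^ 2 ∧
      x = quantileLoss (loss i) p.1 δ}

/-- The local DEC at the model `Ms i0`:
`p-dec^{loc}_ε(M, M₀) := sup { inf_π (L(M₁,π) + L(M₀,π)) :
    M₁ ∈ M, sup_π D_TV(M₁(π), M₀(π)) ≤ ε }`. -/
noncomputable def pdecLoc {Θ Z ι : Type*} [MeasurableSpace Θ] [MeasurableSpace Z]
    (Ms : ι → Θ → Measure Z) (loss : ι → Θ → ℝ) (i0 : ι) (ε : ℝ) : EReal :=
  sSup {x : EReal | ∃ i : ι, (∀ π, TVdist (Ms i π) (Ms i0 π) ≤ ε) ∧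
    x = ⨅ π : Θ, ((loss i π + loss i0 π : ℝ) : EReal)}

/-!
Fix `M₁` with `D_TV(M₁(π), M₀(π)) ≤ ε` for all `π`. Whatever `q` is, neither `M₁` nor `M₀` can be
excluded by the constraint, since `D_ℓ ≤ D_TV` for every `[0,1]`-valued test `ℓ`. With
`c = inf_π (L(M₁,π) + L(M₀,π))`, every `π` has `L(M₁,π) ≥ c/2` or `L(M₀,π) ≥ c/2`, so one of these
two events has `p`-probability at least `1/2`, and the median loss under that model is at least
`c/2`.
-/

lemma coe_mul_sSup_le {a : ℝ} (ha : 0 < a) {s : Set EReal} {b : EReal}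
    (h : ∀ x ∈ s, (a : EReal) * x ≤ b) : (a : EReal) * sSup s ≤ b := by
  have mul_le_iff (x : EReal) : (a : EReal) * x ≤ b ↔ x ≤ b / a := by
    rw [EReal.le_div_iff_mul_le (EReal.coe_pos.2 ha) (EReal.coe_ne_top a), mul_comm]
  exact (mul_le_iff _).2 (sSup_le fun x hx => (mul_le_iff x).1 (h x hx))

/-- `S` need not be measurable, so `q S = 1` does not make `f ≤ c` hold almost everywhere by itself.
It does for integrable `f`, whose sublevel sets are null-measurable; otherwise the integral takes
the junk value `0`. -/
lemma integral_le_of_forall_mem_le_of_prob_eq_one {α : Type*} [MeasurableSpace α] {q : Measure α}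
    [IsProbabilityMeasure q] {S : Set α} (hS : q S = 1) {f : α → ℝ} {c : ℝ} (hc : 0 ≤ c)
    (hf : ∀ x ∈ S, f x ≤ c) : ∫ x, f x ∂q ≤ c := by
  by_cases hint : Integrable f q
  · have hnull : NullMeasurableSet {x | f x ≤ c} q :=
      nullMeasurableSet_le hint.aemeasurable aemeasurable_const
    have hone : q {x | f x ≤ c} = 1 := le_antisymm prob_le_one (hS ▸ measure_mono hf)
    have hae : ∀ᵐ x ∂q, f x ≤ c := (mem_ae_iff_prob_eq_one₀ hnull).2 hone
    simpa using integral_mono_ae hint (integrable_const c) hae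
  · rwa [integral_undef hint]

section TotalVariation

variable {Z : Type*} [MeasurableSpace Z]

lemma TVdist_nonneg (P Q : Measure Z) : 0 ≤ TVdist P Q :=
  Real.iSup_nonneg fun _ => abs_nonneg _

lemma TVdist_self (P : Measure Z) : TVdist P P = 0 := by
  simp [TVdist]

lemma abs_measureReal_sub_le_TVdist (P Q : Measure Z) [IsFiniteMeasure P] [IsFiniteMeasure Q]
    {E : Set Z} (hE : MeasurableSet E) : |P.real E - Q.real E| ≤ TVdist P Q := by
  refine le_ciSup (f := fun F : {F : Set Z // MeasurableSet F} => |P.real F.1 - Q.real F.1|)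
    ⟨max (P.real Set.univ) (Q.real Set.univ), ?_⟩ ⟨E, hE⟩
  rintro _ ⟨F, rfl⟩
  exact abs_sub_le_of_nonneg_of_le
    measureReal_nonneg ((measureReal_mono F.1.subset_univ).trans (le_max_left _ _))
    measureReal_nonneg ((measureReal_mono F.1.subset_univ).trans (le_max_right _ _))

lemma integrableOn_measureReal_superlevel (P : Measure Z) [IsFiniteMeasure P] (ℓ : Z → ℝ)
    {s : Set ℝ} (hs : volume s ≠ ∞) : IntegrableOn (fun t => P.real {z | t ≤ ℓ z}) s := by
  have hanti : Antitone fun t => P.real {z | t ≤ ℓ z} := fun _ _ hst =>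
    measureReal_mono fun _ hz => hst.trans hz
  refine Measure.integrableOn_of_bounded (M := P.real Set.univ) hs
    hanti.measurable.aestronglyMeasurable (.of_forall fun t => ?_)
  rw [Real.norm_of_nonneg measureReal_nonneg]
  exact measureReal_mono (Set.subset_univ _)

lemma integral_eq_setIntegral_Ioc_measureReal_superlevel (P : Measure Z) [IsFiniteMeasure P]
    {ℓ : Z → ℝ} (hmeas : Measurable ℓ) {M : ℝ} (hℓ : ∀ z, ℓ z ∈ Set.Icc 0 M) :
    ∫ z, ℓ z ∂P = ∫ t in Set.Ioc 0 M, P.real {z | t ≤ ℓ z} :=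
  (Integrable.of_mem_Icc 0 M hmeas.aemeasurable (.of_forall hℓ)).integral_eq_integral_Ioc_meas_le
    (.of_forall fun z => (hℓ z).1) (.of_forall fun z => (hℓ z).2)

lemma Dl_le_TVdist (P Q : Measure Z) [IsFiniteMeasure P] [IsFiniteMeasure Q] {ℓ : Z → ℝ}
    (hmeas : Measurable ℓ) (hℓ : ∀ z, ℓ z ∈ Set.Icc (0 : ℝ) 1) : Dl ℓ P Q ≤ TVdist P Q := by
  have hvol : volume (Set.Ioc (0 : ℝ) 1) ≠ ∞ := measure_Ioc_lt_top.ne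
  calc Dl ℓ P Q
      = ‖∫ t in Set.Ioc (0 : ℝ) 1, (P.real {z | t ≤ ℓ z} - Q.real {z | t ≤ ℓ z})‖ := by
        rw [integral_sub (integrableOn_measureReal_superlevel P ℓ hvol)
          (integrableOn_measureReal_superlevel Q ℓ hvol),
          ← integral_eq_setIntegral_Ioc_measureReal_superlevel P hmeas hℓ,
          ← integral_eq_setIntegral_Ioc_measureReal_superlevel Q hmeas hℓ, Dl, Real.norm_eq_abs]
    _ ≤ TVdist P Q * volume.real (Set.Ioc (0 : ℝ) 1) :=
        norm_setIntegral_le_of_norm_le_const hvol.lt_top fun _ _ =>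
          abs_measureReal_sub_le_TVdist P Q (measurableSet_le measurable_const hmeas)
    _ = TVdist P Q := by simp

end TotalVariation

section Quantile

variable {Θ : Type*} [MeasurableSpace Θ]

lemma coe_le_quantileLoss {loss : Θ → ℝ} {p : Measure Θ} {δ Δ : ℝ} (hΔ : 0 ≤ Δ)
    (h : δ ≤ p.real {π | Δ ≤ loss π}) : (Δ : EReal) ≤ quantileLoss loss p δ :=
  le_sSup ⟨Δ, hΔ, h, rfl⟩

lemma coe_le_quantileLoss_or_coe_le_quantileLoss (p : Measure Θ) [IsProbabilityMeasure p]
    {f g : Θ → ℝ} {a b δ₁ δ₂ : ℝ} (ha : 0 ≤ a) (hb : 0 ≤ b) (hδ : δ₁ + δ₂ ≤ 1)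
    (hfg : ∀ π, a ≤ f π ∨ b ≤ g π) :
    (a : EReal) ≤ quantileLoss f p δ₁ ∨ (b : EReal) ≤ quantileLoss g p δ₂ := by
  have hcover : {π | a ≤ f π} ∪ {π | b ≤ g π} = Set.univ := Set.eq_univ_of_forall hfg
  have hsum : 1 ≤ p.real {π | a ≤ f π} + p.real {π | b ≤ g π} := by
    simpa only [hcover, probReal_univ] using
      measureReal_union_le (μ := p) {π | a ≤ f π} {π | b ≤ g π}
  have hlarge : δ₁ ≤ p.real {π | a ≤ f π} ∨ δ₂ ≤ p.real {π | b ≤ g π} := by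
    by_contra! hlt
    linarith [hlt.1, hlt.2]
  exact hlarge.imp (coe_le_quantileLoss ha) (coe_le_quantileLoss hb)

lemma half_mul_iInf_add_le_max_quantileLoss (p : Measure Θ) [IsProbabilityMeasure p]
    {f g : Θ → ℝ} (hfg : ∀ π, 0 ≤ f π + g π) {δ : ℝ} (hδ : δ ≤ 1 / 2) :
    ((1 / 2 : ℝ) : EReal) * ⨅ π, ((f π + g π : ℝ) : EReal) ≤
      max (quantileLoss f p δ) (quantileLoss g p δ) := by
  obtain ⟨π₀⟩ : Nonempty Θ := p.nonempty_of_neZero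
  have hinf_nonneg : 0 ≤ ⨅ π, ((f π + g π : ℝ) : EReal) :=
    le_iInf fun π => EReal.coe_nonneg.2 (hfg π)
  have hinf_lt_top : ⨅ π, ((f π + g π : ℝ) : EReal) < ⊤ :=
    (iInf_le _ π₀).trans_lt (EReal.coe_lt_top _)
  obtain ⟨c, hc⟩ : ∃ c : ℝ, (c : EReal) = ⨅ π, ((f π + g π : ℝ) : EReal) :=
    ⟨_, EReal.coe_toReal hinf_lt_top.ne (EReal.bot_lt_zero.trans_le hinf_nonneg).ne'⟩
  have hc_nonneg : 0 ≤ c := EReal.coe_nonneg.1 (hc ▸ hinf_nonneg)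
  have hc_le (π : Θ) : c ≤ f π + g π :=
    EReal.coe_le_coe_iff.1 (hc ▸ iInf_le _ π)
  have hhalf (π : Θ) : 1 / 2 * c ≤ f π ∨ 1 / 2 * c ≤ g π := by
    by_contra! hlt
    linarith [hc_le π, hlt.1, hlt.2]
  rw [← hc, ← EReal.coe_mul, le_max_iff]
  exact coe_le_quantileLoss_or_coe_le_quantileLoss p (by positivity) (by positivity)
    (by linarith) hhalf

end Quantile

section TwoPoint

variable {Θ Z ι : Type*} [MeasurableSpace Θ] [MeasurableSpace Z] {Ms : ι → Θ → Measure Z}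
  {loss : ι → Θ → ℝ} {Mb : Θ → Measure Z} {ε δ : ℝ}

lemma testErr_le_sq_of_TVdist_le {q : Measure (Θ × (Z → ℝ))} (hq : IsTestDist q) {i : ι}
    (hMs : ∀ π, IsFiniteMeasure (Ms i π)) (hMb : ∀ π, IsFiniteMeasure (Mb π))
    (hTV : ∀ π, TVdist (Ms i π) (Mb π) ≤ ε) : testErr Ms Mb q i ≤ ε ^ 2 := by
  obtain ⟨_, hadmissible⟩ := hq
  refine integral_le_of_forall_mem_le_of_prob_eq_one hadmissible (sq_nonneg ε) ?_
  rintro ⟨π, ℓ⟩ ⟨hmeas, hℓ⟩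
  have hDl : Dl ℓ (Ms i π) (Mb π) ≤ ε := (Dl_le_TVdist _ _ hmeas hℓ).trans (hTV π)
  exact pow_le_pow_left₀ (abs_nonneg _) hDl 2

lemma half_mul_iInf_add_le_qpdecLDP {i j : ι} (hMi : ∀ π, IsFiniteMeasure (Ms i π))
    (hMj : ∀ π, IsFiniteMeasure (Ms j π)) (hMb : ∀ π, IsFiniteMeasure (Mb π))
    (hloss : ∀ π, 0 ≤ loss i π + loss j π) (hi : ∀ π, TVdist (Ms i π) (Mb π) ≤ ε)
    (hj : ∀ π, TVdist (Ms j π) (Mb π) ≤ ε) (hδ : δ ≤ 1 / 2) :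
    ((1 / 2 : ℝ) : EReal) * ⨅ π, ((loss i π + loss j π : ℝ) : EReal) ≤
      qpdecLDP Ms loss Mb ε δ := by
  refine le_iInf fun ⟨p, _⟩ => le_iInf fun ⟨q, hq⟩ => ?_
  refine (half_mul_iInf_add_le_max_quantileLoss p hloss hδ).trans (max_le ?_ ?_)
  · exact le_sSup ⟨i, testErr_le_sq_of_TVdist_le hq hMi hMb hi, rfl⟩
  · exact le_sSup ⟨j, testErr_le_sq_of_TVdist_le hq hMj hMb hj, rfl⟩

end TwoPoint

theorem quantile_pdec_two_point_ge_local_general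
    {Θ Z ι : Type*} [MeasurableSpace Θ] [MeasurableSpace Z]
    (Ms : ι → Θ → Measure Z) (hMs : ∀ i π, IsFiniteMeasure (Ms i π))
    (loss : ι → Θ → ℝ) (hloss : ∀ i π, 0 ≤ loss i π) (i0 : ι) (ε : ℝ) {δ : ℝ} (hδ : δ ≤ 1 / 2) :
    ((1 / 2 : ℝ) : EReal) * pdecLoc Ms loss i0 ε ≤
      ⨆ i : ι, qpdecLDP (fun b : Bool => if b then Ms i else Ms i0)
        (fun b => if b then loss i else loss i0) (Ms i0) ε δ := by
  refine coe_mul_sSup_le one_half_pos ?_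
  rintro _ ⟨i, hTV, rfl⟩
  have hself (π : Θ) : TVdist (Ms i0 π) (Ms i0 π) ≤ ε :=
    (TVdist_self _).trans_le ((TVdist_nonneg _ _).trans (hTV π))
  have hsum (π : Θ) : 0 ≤ loss i π + loss i0 π := add_nonneg (hloss i π) (hloss i0 π)
  exact le_iSup_of_le i <| half_mul_iInf_add_le_qpdecLDP
    (loss := fun b : Bool => if b then loss i else loss i0) (i := true) (j := false)
    (hMs i) (hMs i0) (hMs i0) hsum hTV hself hδ

/-- **Quantile private PAC-DEC of two-point subclasses dominates the local DEC.** For a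
class `M = (Ms i)_{i : ι}` of models with losses `loss i ≥ 0`, a distinguished model
`M₀ = Ms i0 ∈ M` and every `ε > 0`:
`sup_{M₁∈M} p-dec^{q,LDP}_{ε,1/2}({M₁, M₀}, M₀) ≥ (1/2) p-dec^{loc}_ε(M, M₀)`. -/
theorem quantile_pdec_two_point_ge_local
    {Θ Z ι : Type*} [MeasurableSpace Θ] [MeasurableSingletonClass Θ] [MeasurableSpace Z]
    (Ms : ι → Θ → Measure Z) (hMs : ∀ i π, IsProbabilityMeasure (Ms i π))
    (loss : ι → Θ → ℝ) (hloss : ∀ i π, 0 ≤ loss i π) (i0 : ι)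
    (ε : ℝ) (hε : 0 < ε) :
    ((1 / 2 : ℝ) : EReal) * pdecLoc Ms loss i0 ε ≤
      ⨆ i : ι, qpdecLDP (fun b : Bool => if b then Ms i else Ms i0)
        (fun b => if b then loss i else loss i0) (Ms i0) ε (1 / 2) := by
  exact quantile_pdec_two_point_ge_local_general Ms (fun i π => have := hMs i π; inferInstance)
    loss hloss i0 ε le_rfl
end
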